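/- arXiv:2106.11940 — 2 statements merged into one kernel-verified Lean document; each statement's English description precedes it below -/
import Mathlib

section
/- Let g ∈ C^∞(ℝ) be strictly increasing with g(0)=0 and g'(0)=0. Let φ_N ∈ L²(𝕋²) be such that its Fourier coefficients φ̂_N are supported in B(0,N) = {k ∈ ℤ² : |k| ≤ N}, and let I ⊂ ℝ be a finite interval centered at zero. Then for every ε>0 there is a constant C = C(ε,I), independent of N and φ_N, such that ‖ g'(t)^{1/4} S(t)φ_N ‖_{L⁴(I×𝕋²)} ≤ C N^ε ‖φ_N‖_{L²(𝕋²)}. -/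
/-!
The weight `g'(t)` is the Jacobian of the time change `s = g(t)`. After this substitution
(`lintegral_image_eq_lintegral_abs_deriv_mul`) the fourth power of the left side is the integral
over `g(I) × 𝕋²` of `|P|⁴`, where `P(s, x) = ∑ c_k e^{i(k·x - s|k|²)}` is the free evolution. As
`P` is `2π`-periodic in `s`, the bounded set `g(I)` costs only a number of periods depending on `I`
(`lintegral_periodic_le`), and it remains to bound the `L⁴(𝕋³)` norm of `P`.

Writing `|P|⁴ = |P²|²`, the function `P²` is a trigonometric polynomial with frequencies
`(k + l, -|k|² - |l|²)`. Parseval and Cauchy-Schwarz on the fibres of this frequency map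
(`lintegral_trig3_le`) give the bound `D (∑ |c_k|²)²`, where `D` is the largest fibre. On a fibre
`|k - l|²` is constant and `k - l` determines `(k, l)`, so `D` is at most the number of lattice
points on a circle of radius at most `2N` (`fiber_card_le`).

That number is `O(N ^ ε)` (`exists_normSet_ncard_le`): the count of Gaussian integers of norm `n` is
submultiplicative on coprime arguments, by unique factorization in `ℤ[i]`, and at most
`A (e + 1) ^ 2` at `n = p ^ e`, with `A` the number of units. Finally `∑ |c_k|² ≤ (2π)² ‖φ‖²` is Bessel's inequality
(`bessel_fCoeff2`), which holds with lower integrals even for non-measurable `φ`.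
-/

open MeasureTheory Real Set Filter
open scoped ENNReal NNReal

noncomputable section

/-- The Euclidean length `|k|` of a frequency `k ∈ ℤ²`. -/
def zAbs2 (k : ℤ × ℤ) : ℝ := Real.sqrt ((k.1 : ℝ) ^ 2 + (k.2 : ℝ) ^ 2)

/-- A function on `𝕋²`, modelled as a `2π`-periodic function on `ℝ²`. -/
def Periodic2 (φ : ℝ → ℝ → ℂ) : Prop :=
  ∀ x1 x2 : ℝ, φ (x1 + 2 * π) x2 = φ x1 x2 ∧ φ x1 (x2 + 2 * π) = φ x1 x2

/-- Fourier coefficient `φ̂(k) = ∫_{𝕋²} e^{-ik·x} φ(x) dx`. -/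
def fCoeff2 (φ : ℝ → ℝ → ℂ) (k : ℤ × ℤ) : ℂ :=
  ∫ x1 in (0:ℝ)..(2 * π), ∫ x2 in (0:ℝ)..(2 * π),
    Complex.exp (-Complex.I * (((k.1 : ℝ) * x1 + (k.2 : ℝ) * x2 : ℝ) : ℂ)) * φ x1 x2

/-- The Sobolev `H^s(𝕋²)` norm. -/
def HsNorm2 (s : ℝ) (φ : ℝ → ℝ → ℂ) : ℝ≥0∞ :=
  (∑' k : ℤ × ℤ, ENNReal.ofReal ((1 + zAbs2 k) ^ (2 * s) * ‖fCoeff2 φ k‖ ^ 2)) ^ ((1:ℝ)/2)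

/-- Space-time Fourier transform with time transform subordinate to `g`:
`ũ(τ,k) = ∫ e^{-i g(t) τ} (u(t,·))^(k) dt`.  For `g = id` this is the standard transform. -/
def tFT2 (g : ℝ → ℝ) (u : ℝ → ℝ → ℝ → ℂ) (τ : ℝ) (k : ℤ × ℤ) : ℂ :=
  ∫ t : ℝ, Complex.exp (-Complex.I * ((g t * τ : ℝ) : ℂ)) * fCoeff2 (u t) k

/-- The `X^{s,b}_g(ℝ×𝕋²)` norm. -/
def XsbgNorm2 (g : ℝ → ℝ) (s b : ℝ) (u : ℝ → ℝ → ℝ → ℂ) : ℝ≥0∞ :=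
  (∑' k : ℤ × ℤ,
      ENNReal.ofReal ((1 + zAbs2 k) ^ (2 * s)) *
        ∫⁻ τ : ℝ,
          ENNReal.ofReal ((1 + |τ - zAbs2 k ^ 2|) ^ (2 * b) * ‖tFT2 g u τ k‖ ^ 2)) ^ ((1:ℝ)/2)

/-- The standard `X^{s,b}(ℝ×𝕋²)` norm. -/
def XsbNorm2 (s b : ℝ) (u : ℝ → ℝ → ℝ → ℂ) : ℝ≥0∞ := XsbgNorm2 id s b u

/-- Time derivative `∂_t u`. -/
def tderiv2 (u : ℝ → ℝ → ℝ → ℂ) (t x1 x2 : ℝ) : ℂ := deriv (fun r => u r x1 x2) t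

/-- Second derivative in the first space variable, `∂²_{x₁}`. -/
def dX1 (φ : ℝ → ℝ → ℂ) (x1 x2 : ℝ) : ℂ := iteratedDeriv 2 (fun y => φ y x2) x1

/-- Second derivative in the second space variable, `∂²_{x₂}`. -/
def dX2 (φ : ℝ → ℝ → ℂ) (x1 x2 : ℝ) : ℂ := iteratedDeriv 2 (fun y => φ x1 y) x2

/-- `u ∈ C([-T,T]; H^s(𝕋²))`: finite `H^s` norms and continuity in time for the `H^s` metric. -/
def ContHs2 (s T : ℝ) (u : ℝ → ℝ → ℝ → ℂ) : Prop :=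
  (∀ t ∈ Icc (-T) T, HsNorm2 s (u t) < ⊤) ∧
    ∀ t₀ ∈ Icc (-T) T,
      Tendsto (fun t => HsNorm2 s (fun x1 x2 => u t x1 x2 - u t₀ x1 x2))
        (nhdsWithin t₀ (Icc (-T) T)) (nhds 0)

/-- The solution operator `S(t)φ = Σ_k e^{ik·x} e^{-i g(t)|k|²} φ̂(k)`. -/
def Sop2 (g : ℝ → ℝ) (φ : ℝ → ℝ → ℂ) (t x1 x2 : ℝ) : ℂ :=
  ∑' k : ℤ × ℤ,
    Complex.exp (Complex.I * (((k.1 : ℝ) * x1 + (k.2 : ℝ) * x2 : ℝ) : ℂ)) *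
      Complex.exp (-Complex.I * ((g t * ((k.1 : ℝ) ^ 2 + (k.2 : ℝ) ^ 2) : ℝ) : ℂ)) *
        fCoeff2 φ k

/-- The two-parameter solution operator `S(t,s)φ = Σ_k e^{ik·x} e^{-i(g(t)-g(s))|k|²} φ̂(k)`. -/
def Sop2' (g : ℝ → ℝ) (φ : ℝ → ℝ → ℂ) (t s' x1 x2 : ℝ) : ℂ :=
  ∑' k : ℤ × ℤ,
    Complex.exp (Complex.I * (((k.1 : ℝ) * x1 + (k.2 : ℝ) * x2 : ℝ) : ℂ)) *
      Complex.exp (-Complex.I * (((g t - g s') * ((k.1 : ℝ) ^ 2 + (k.2 : ℝ) ^ 2) : ℝ) : ℂ)) *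
        fCoeff2 φ k

/-- The `L^p(𝕋²)` norm. -/
def LpT2 (p : ℝ) (φ : ℝ → ℝ → ℂ) : ℝ≥0∞ :=
  (∫⁻ x1 in Ioc (0:ℝ) (2 * π), ∫⁻ x2 in Ioc (0:ℝ) (2 * π),
      ENNReal.ofReal (‖φ x1 x2‖ ^ p)) ^ ((1:ℝ)/p)

/-- The `L^p(I×𝕋²)` norm. -/
def LpIT2 (p : ℝ) (I : Set ℝ) (u : ℝ → ℝ → ℝ → ℂ) : ℝ≥0∞ :=
  (∫⁻ t in I, ∫⁻ x1 in Ioc (0:ℝ) (2 * π), ∫⁻ x2 in Ioc (0:ℝ) (2 * π),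
      ENNReal.ofReal (‖u t x1 x2‖ ^ p)) ^ ((1:ℝ)/p)

/-- A smooth cutoff function adapted to the interval `[r₁,r₂]`:
it is `1` on `[r₁,r₂]`, takes values in `[0,1]` and is supported in `[2r₁,2r₂]`. -/
def AdaptedCutoff (χ : ℝ → ℝ) (r₁ r₂ : ℝ) : Prop :=
  ContDiff ℝ (⊤ : ℕ∞) χ ∧ (∀ t ∈ Icc r₁ r₂, χ t = 1) ∧ (∀ t, χ t ∈ Icc (0:ℝ) 1) ∧
    tsupport χ ⊆ Icc (2 * r₁) (2 * r₂)

/-- Time Fourier transform subordinate to `g`: `f̃(τ) = ∫ e^{-i g(t) τ} f(t) dt`. -/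
def tFTt (g : ℝ → ℝ) (f : ℝ → ℂ) (τ : ℝ) : ℂ :=
  ∫ t : ℝ, Complex.exp (-Complex.I * ((g t * τ : ℝ) : ℂ)) * f t

/-- The `H^{1,b}_g(ℝ)` norm `∫ ⟨τ⟩^b |f̃(τ)| dτ`; for `g = id` it is the `H^{1,b}` norm. -/
def H1bgNorm (g : ℝ → ℝ) (b : ℝ) (f : ℝ → ℂ) : ℝ≥0∞ :=
  ∫⁻ τ : ℝ, ENNReal.ofReal ((1 + τ ^ 2) ^ (b / 2) * ‖tFTt g f τ‖)

/-- The `H^b(ℝ)` norm in time, `(∫ ⟨τ⟩^{2b}|f̂(τ)|² dτ)^{1/2}`. -/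
def HbtNorm (b : ℝ) (f : ℝ → ℂ) : ℝ≥0∞ :=
  (∫⁻ τ : ℝ, ENNReal.ofReal ((1 + τ ^ 2) ^ b * ‖tFTt id f τ‖ ^ 2)) ^ ((1:ℝ)/2)

/-- The mixed norm `H^{p₁}_t H^{s₁}_x` on `ℝ × 𝕋²`. -/
def HptHsxNorm (p₁ s₁ : ℝ) (v : ℝ → ℝ → ℝ → ℂ) : ℝ≥0∞ :=
  (∑' k : ℤ × ℤ,
      ENNReal.ofReal ((1 + zAbs2 k) ^ (2 * s₁)) *
        ∫⁻ τ : ℝ, ENNReal.ofReal ((1 + τ ^ 2) ^ p₁ * ‖tFT2 id v τ k‖ ^ 2)) ^ ((1:ℝ)/2)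

/-! ### Lattice points on circles -/

/-- The Gaussian integers of norm `m`, i.e. the lattice points on the circle of radius `√m`. -/
def normSet (m : ℕ) : Set GaussianInt := {w | w.norm = (m : ℤ)}

theorem normSet_finite (m : ℕ) : (normSet m).Finite := by
  have hinj : Function.Injective (fun w : GaussianInt => (w.re, w.im)) := by
    intro a b h
    simp only [Prod.mk.injEq] at h
    exact Zsqrtd.ext h.1 h.2
  refine Set.Finite.of_finite_image (f := fun w : GaussianInt => (w.re, w.im)) ?_ hinj.injOn
  refine ((Set.finite_Icc (-(m : ℤ)) m).prod (Set.finite_Icc (-(m : ℤ)) m)).subset ?_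
  rintro _ ⟨w, hw, rfl⟩
  have h : w.re * w.re + w.im * w.im = m := by
    have := hw
    simp only [normSet, Set.mem_ofPred_eq, Zsqrtd.norm_def] at this
    linarith
  simp only [Set.mem_prod, Set.mem_Icc]
  refine ⟨⟨?_, ?_⟩, ?_, ?_⟩ <;> by_contra! hc <;>
    nlinarith [mul_self_nonneg w.re, mul_self_nonneg w.im]

theorem dvd_of_mem_normSet {m : ℕ} {w : GaussianInt} (hw : w ∈ normSet m) :
    w ∣ (m : GaussianInt) := by
  refine ⟨star w, ?_⟩
  have h := Zsqrtd.norm_eq_mul_conj w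
  rw [← h, show w.norm = (m : ℤ) from hw]
  simp

theorem norm_natCast_gauss (m : ℕ) : (m : GaussianInt).norm = (m : ℤ) * m := by
  simp

/-- Submultiplicativity on coprime arguments: since `w ∣ N(w) = ab`, unique factorization splits
`w` into a divisor of `a` times a divisor of `b`, and coprimality forces their norms. -/
theorem normSet_ncard_mul_le {a b : ℕ} (hab : a.Coprime b) (ha : 0 < a) (hb : 0 < b) :
    (normSet (a * b)).ncard ≤ (normSet a).ncard * (normSet b).ncard := by
  have hsub : normSet (a * b) ⊆
      (fun p : GaussianInt × GaussianInt => p.1 * p.2) '' (normSet a ×ˢ normSet b) := by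
    intro w hw
    have hd := dvd_of_mem_normSet hw
    rw [Nat.cast_mul] at hd
    obtain ⟨u, v, hu, hv, rfl⟩ := exists_dvd_and_dvd_of_dvd_mul hd
    refine ⟨(u, v), ?_, rfl⟩
    have huN : u.norm ∣ (a : ℤ) * a := by
      obtain ⟨z, hz⟩ := hu
      rw [← norm_natCast_gauss, hz, Zsqrtd.norm_mul]; exact dvd_mul_right _ _
    have hvN : v.norm ∣ (b : ℤ) * b := by
      obtain ⟨z, hz⟩ := hv
      rw [← norm_natCast_gauss, hz, Zsqrtd.norm_mul]; exact dvd_mul_right _ _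
    have hprod : u.norm * v.norm = (a : ℤ) * b := by
      have : (u * v).norm = ((a * b : ℕ) : ℤ) := hw
      rw [Zsqrtd.norm_mul] at this
      simpa using this
    obtain ⟨n1, h1⟩ := Int.eq_ofNat_of_zero_le (GaussianInt.norm_nonneg u)
    obtain ⟨n2, h2⟩ := Int.eq_ofNat_of_zero_le (GaussianInt.norm_nonneg v)
    rw [h1] at huN hprod
    rw [h2] at hvN hprod
    norm_cast at huN hvN hprod
    have c1 : n1.Coprime b := Nat.Coprime.coprime_dvd_left huN (hab.mul_left hab)
    have c2 : n2.Coprime a := Nat.Coprime.coprime_dvd_left hvN (hab.symm.mul_left hab.symm)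
    have d1 : n1 ∣ a := c1.dvd_of_dvd_mul_right (hprod ▸ dvd_mul_right _ _)
    have d2 : n2 ∣ b := c2.dvd_of_dvd_mul_left (hprod ▸ dvd_mul_left _ _)
    have l1 := Nat.le_of_dvd ha d1
    have l2 := Nat.le_of_dvd hb d2
    have e1 : n1 = a := by
      by_contra hne
      have : n1 < a := lt_of_le_of_ne l1 hne
      nlinarith
    have e2 : n2 = b := by
      subst e1
      exact Nat.eq_of_mul_eq_mul_left ha hprod
    exact ⟨by simp [normSet, h1, e1], by simp [normSet, h2, e2]⟩
  calc (normSet (a * b)).ncard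
      ≤ ((fun p : GaussianInt × GaussianInt => p.1 * p.2) '' (normSet a ×ˢ normSet b)).ncard :=
        Set.ncard_le_ncard hsub (((normSet_finite a).prod (normSet_finite b)).image _)
    _ ≤ (normSet a ×ˢ normSet b).ncard :=
        Set.ncard_image_le ((normSet_finite a).prod (normSet_finite b))
    _ = _ := Set.ncard_prod

theorem associated_pow_of_dvd_pow {q w : GaussianInt} (hq : Prime q ∨ IsUnit q) {e : ℕ}
    (h : w ∣ q ^ e) : ∃ i ≤ e, Associated w (q ^ i) := by
  rcases hq with hq | hq
  · exact (dvd_prime_pow hq e).1 h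
  · refine ⟨0, Nat.zero_le _, ?_⟩
    rw [pow_zero, associated_one_iff_isUnit]
    exact isUnit_of_dvd_unit h (hq.pow e)

/-- A rational prime has at most two prime factors in `ℤ[i]`. -/
theorem exists_gauss_factor (p : ℕ) (hp : p.Prime) :
    ∃ a b : GaussianInt, (p : GaussianInt) = a * b ∧ (Prime a ∨ IsUnit a) ∧
      (Prime b ∨ IsUnit b) := by
  by_cases hirr : Irreducible (p : GaussianInt)
  · exact ⟨p, 1, by simp, Or.inl hirr.prime, Or.inr isUnit_one⟩
  have hnorm : ∀ z : GaussianInt, z.norm.natAbs = p → Prime z := by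
    intro z hz
    refine Irreducible.prime ⟨?_, ?_⟩
    · intro hu
      have := Zsqrtd.norm_eq_one_iff.2 hu
      exact hp.one_lt.ne' (hz ▸ this)
    · intro x y hxy
      rw [hxy, Zsqrtd.norm_mul, Int.natAbs_mul] at hz
      have hpr : Nat.Prime (x.norm.natAbs * y.norm.natAbs) := hz ▸ hp
      rcases Nat.prime_mul_iff.1 hpr with h | h
      · exact Or.inr (Zsqrtd.norm_eq_one_iff.1 h.2)
      · exact Or.inl (Zsqrtd.norm_eq_one_iff.1 h.2)
  have : Fact p.Prime := ⟨hp⟩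
  obtain ⟨x, y, hxy⟩ := GaussianInt.sq_add_sq_of_nat_prime_of_not_irreducible p hirr
  have hxyZ : (x : ℤ) * x + y * y = p := by
    have : ((x ^ 2 + y ^ 2 : ℕ) : ℤ) = p := by rw [hxy]
    push_cast at this
    linarith
  refine ⟨⟨x, y⟩, ⟨x, -y⟩, ?_, Or.inl (hnorm _ ?_), Or.inl (hnorm _ ?_)⟩
  · apply Zsqrtd.ext
    · simp; linarith
    · simp; ring
  · simp only [Zsqrtd.norm_def]
    rw [show (x : ℤ) * x - -1 * y * y = p by linarith]; simp
  · simp only [Zsqrtd.norm_def]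
    rw [show (x : ℤ) * x - -1 * (-y) * (-y) = p by linarith]; simp

theorem normSet_ncard_prime_pow_le (p e : ℕ) (hp : p.Prime) :
    (normSet (p ^ e)).ncard ≤ (normSet 1).ncard * (e + 1) ^ 2 := by
  obtain ⟨a, b, hpab, ha, hb⟩ := exists_gauss_factor p hp
  set T : Set (GaussianInt × ℕ × ℕ) := normSet 1 ×ˢ (Set.Iic e ×ˢ Set.Iic e) with hT
  have hTfin : T.Finite := (normSet_finite 1).prod ((Set.finite_Iic e).prod (Set.finite_Iic e))
  have hsub : normSet (p ^ e) ⊆ (fun q => q.1 * (a ^ q.2.1 * b ^ q.2.2)) '' T := by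
    intro w hw
    have hd := dvd_of_mem_normSet hw
    rw [Nat.cast_pow, hpab, mul_pow] at hd
    obtain ⟨u, v, hu, hv, rfl⟩ := exists_dvd_and_dvd_of_dvd_mul hd
    obtain ⟨i, hi, hui⟩ := associated_pow_of_dvd_pow ha hu
    obtain ⟨j, hj, hvj⟩ := associated_pow_of_dvd_pow hb hv
    obtain ⟨z, hz⟩ := (hui.mul_mul hvj).symm
    refine ⟨(z, i, j), ⟨?_, hi, hj⟩, ?_⟩
    · have h1 := Zsqrtd.norm_eq_one_iff.2 z.isUnit
      have h0 := GaussianInt.norm_nonneg (z : GaussianInt)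
      simp only [normSet, Set.mem_ofPred_eq]
      omega
    · simp only
      rw [← hz, mul_comm]
  calc (normSet (p ^ e)).ncard ≤ ((fun q => q.1 * (a ^ q.2.1 * b ^ q.2.2)) '' T).ncard :=
        Set.ncard_le_ncard hsub (hTfin.image _)
    _ ≤ T.ncard := Set.ncard_image_le hTfin
    _ = _ := by
        have : (Set.Iic e).ncard = e + 1 := by
          rw [Set.ncard_eq_toFinset_card']; simp
        rw [hT, Set.ncard_prod, Set.ncard_prod, this, sq]

theorem one_le_ncard_normSet_one : 1 ≤ (normSet 1).ncard := by
  rw [Nat.one_le_iff_ne_zero, ← Nat.pos_iff_ne_zero, Set.ncard_pos (normSet_finite 1)]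
  exact ⟨1, by simp [normSet]⟩

/-- The number of lattice points on the circle of radius `√n` is `O(n ^ δ)`. For primes `p` with
`p ^ δ ≥ 4A`, `A` the number of units of `ℤ[i]`, the local factor `A (e + 1) ^ 2` is at most `p ^ (δ e)`; each of the finitely many
remaining primes costs a constant factor `K`. -/
theorem exists_normSet_ncard_le (δ : ℝ) (hδ : 0 < δ) :
    ∃ C : ℝ, 0 < C ∧ ∀ n : ℕ, 1 ≤ n → ((normSet n).ncard : ℝ) ≤ C * (n : ℝ) ^ δ := by
  set A : ℕ := (normSet 1).ncard with hA
  have hA1 : 1 ≤ A := one_le_ncard_normSet_one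
  have hA1' : (1 : ℝ) ≤ A := by exact_mod_cast hA1
  have h2δ : (1 : ℝ) < 2 ^ δ := Real.one_lt_rpow (by norm_num) hδ
  obtain ⟨K₀, hK₀⟩ : ∃ K₀ : ℝ, ∀ e : ℕ, ((e : ℝ) + 1) ^ 2 / (2 ^ δ) ^ e ≤ K₀ := by
    have ht := tendsto_pow_const_div_const_pow_of_one_lt 2 h2δ
    have ht' := ((Filter.tendsto_add_atTop_iff_nat 1).2 ht).mul_const ((2 : ℝ) ^ δ)
    obtain ⟨K, hK⟩ := ht'.bddAbove_range
    refine ⟨K, fun e => ?_⟩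
    have := hK ⟨e, rfl⟩
    simp only [Nat.cast_add, Nat.cast_one, pow_succ (_ : ℝ) e] at this
    refine le_trans (le_of_eq ?_) this
    field_simp
  set K : ℝ := max 1 (A * K₀) with hK
  have hK1 : 1 ≤ K := le_max_left _ _
  obtain ⟨P, hP⟩ : ∃ P : ℕ, ∀ p : ℕ, P ≤ p → (4 * A : ℝ) ≤ (p : ℝ) ^ δ := by
    have ht := (tendsto_rpow_atTop hδ).comp (tendsto_natCast_atTop_atTop (R := ℝ))
    obtain ⟨P, hP⟩ := Filter.eventually_atTop.1 (ht.eventually_ge_atTop (4 * A : ℝ))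
    exact ⟨P, hP⟩
  have key : ∀ n : ℕ, n ≠ 0 → n ≠ 1 → ((normSet n).ncard : ℝ) ≤
      K ^ (n.primeFactors.filter (· < P)).card * (n : ℝ) ^ δ := by
    intro n
    induction n using Nat.recOnPosPrimePosCoprime with
    | zero => intro h; exact absurd rfl h
    | one => intro _ h; exact absurd rfl h
    | prime_pow p e hp he =>
      intro _ _
      have hloc : ((normSet (p ^ e)).ncard : ℝ) ≤ A * ((e : ℝ) + 1) ^ 2 := by
        exact_mod_cast normSet_ncard_prime_pow_le p e hp
      have hpow : (((p ^ e : ℕ) : ℝ)) ^ δ = ((p : ℝ) ^ δ) ^ e := by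
        push_cast
        rw [← Real.rpow_natCast, ← Real.rpow_natCast, ← Real.rpow_mul (by positivity),
          ← Real.rpow_mul (by positivity), mul_comm]
      rw [hpow, Nat.primeFactors_prime_pow he.ne' hp]
      by_cases hpP : p < P
      · rw [Finset.filter_singleton, if_pos hpP]
        simp only [Finset.card_singleton, pow_one]
        have h2p : (2 : ℝ) ^ δ ≤ (p : ℝ) ^ δ :=
          Real.rpow_le_rpow (by norm_num) (by exact_mod_cast hp.two_le) hδ.le
        have h1 := hK₀ e
        rw [div_le_iff₀ (by positivity)] at h1
        calc _ ≤ A * ((e : ℝ) + 1) ^ 2 := hloc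
          _ ≤ A * (K₀ * (2 ^ δ) ^ e) := by gcongr
          _ = A * K₀ * (2 ^ δ) ^ e := by ring
          _ ≤ K * (2 ^ δ) ^ e := by gcongr; exact le_max_right _ _
          _ ≤ _ := by gcongr
      · rw [Finset.filter_singleton, if_neg hpP]
        simp only [Finset.card_empty, pow_zero, one_mul]
        have h1 := hP p (not_lt.1 hpP)
        have h4 : ∀ m : ℕ, ((m : ℝ) + 1) ^ 2 ≤ 4 ^ m := by
          intro m
          have : (m : ℝ) + 1 ≤ 2 ^ m := by exact_mod_cast Nat.lt_two_pow_self
          calc ((m : ℝ) + 1) ^ 2 ≤ (2 ^ m) ^ 2 := by gcongr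
            _ = 4 ^ m := by rw [← pow_mul, mul_comm, pow_mul]; norm_num
        calc _ ≤ A * ((e : ℝ) + 1) ^ 2 := hloc
          _ ≤ (A : ℝ) ^ e * 4 ^ e := by
              gcongr
              · exact le_self_pow₀ hA1' he.ne'
              · exact h4 e
          _ = (4 * A : ℝ) ^ e := by rw [mul_pow, mul_comm]
          _ ≤ _ := by gcongr
    | coprime a b ha hb hab iha ihb =>
      intro _ _
      have h1 := iha (by omega) (by omega)
      have h2 := ihb (by omega) (by omega)
      have h3 : ((normSet (a * b)).ncard : ℝ) ≤ (normSet a).ncard * (normSet b).ncard := by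
        exact_mod_cast normSet_ncard_mul_le hab (by omega) (by omega)
      have hcard : ((a * b).primeFactors.filter (· < P)).card =
          (a.primeFactors.filter (· < P)).card + (b.primeFactors.filter (· < P)).card := by
        rw [hab.primeFactors_mul, Finset.filter_union, Finset.card_union_of_disjoint]
        exact Finset.disjoint_filter_filter hab.disjoint_primeFactors
      calc _ ≤ _ := h3
        _ ≤ _ := mul_le_mul h1 h2 (by positivity) (by positivity)
        _ = _ := by
          rw [hcard, pow_add, Nat.cast_mul, Real.mul_rpow (by positivity) (by positivity)]
          ring
  refine ⟨A * K ^ P, by positivity, fun n hn => ?_⟩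
  by_cases h1 : n = 1
  · subst h1
    simp only [Nat.cast_one, Real.one_rpow, mul_one]
    exact le_mul_of_one_le_right (by positivity) (one_le_pow₀ hK1)
  · refine (key n (by omega) h1).trans ?_
    have hc : (n.primeFactors.filter (· < P)).card ≤ P := by
      calc _ ≤ (Finset.range P).card := Finset.card_le_card (fun x hx => by
            simpa using (Finset.mem_filter.1 hx).2)
        _ = P := Finset.card_range P
    gcongr
    calc K ^ _ ≤ K ^ P := pow_le_pow_right₀ hK1 hc
      _ ≤ A * K ^ P := le_mul_of_one_le_left (by positivity) hA1'

theorem exists_normSet_ncard_le_of_le (δ : ℝ) (hδ : 0 < δ) :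
    ∃ C : ℝ, 0 < C ∧ ∀ (n : ℕ) (X : ℝ), 1 ≤ X → (n : ℝ) ≤ X →
      ((normSet n).ncard : ℝ) ≤ C * X ^ δ := by
  obtain ⟨C, hC, h⟩ := exists_normSet_ncard_le δ hδ
  refine ⟨C + 1, by positivity, fun n X hX hn => ?_⟩
  have hXδ : 1 ≤ X ^ δ := Real.one_le_rpow hX hδ.le
  rcases Nat.eq_zero_or_pos n with rfl | hpos
  · have hsub : normSet 0 ⊆ {0} := by
      intro w hw
      exact GaussianInt.norm_eq_zero.1 (by simpa [normSet] using hw)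
    have h1 : (normSet 0).ncard ≤ 1 := by
      simpa using Set.ncard_le_ncard hsub (Set.finite_singleton 0)
    have h1' : ((normSet 0).ncard : ℝ) ≤ 1 := by exact_mod_cast h1
    nlinarith
  · refine (h n hpos).trans ?_
    have : (n : ℝ) ^ δ ≤ X ^ δ := Real.rpow_le_rpow (by positivity) hn hδ.le
    nlinarith

/-! ### Bessel's inequality on the two-dimensional torus -/

/-- The unnormalized Fourier coefficient `∫₀^{2π} e^{-inx} f(x) dx`. -/
def coef (f : ℝ → ℂ) (n : ℤ) : ℂ :=
  ∫ x in (0:ℝ)..(2 * π), Complex.exp (-Complex.I * (((n : ℝ) * x : ℝ) : ℂ)) * f x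

theorem coef_eq (f : ℝ → ℂ) (n : ℤ) :
    coef f n = ((2 * π : ℝ) : ℂ) * fourierCoeffOn Real.two_pi_pos f n := by
  have hpi : (π : ℂ) ≠ 0 := by exact_mod_cast Real.pi_ne_zero
  rw [fourierCoeffOn_eq_integral, coef]
  have hInt : ∀ x : ℝ, fourier (-n) (x : AddCircle (2 * π - 0)) • f x =
      Complex.exp (-Complex.I * (((n : ℝ) * x : ℝ) : ℂ)) * f x := by
    intro x
    rw [fourier_coe_apply, smul_eq_mul]
    congr 2
    push_cast
    field_simp
    ring
  simp_rw [hInt]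
  rw [Complex.real_smul, ← mul_assoc]
  push_cast
  rw [sub_zero, mul_one_div_cancel (by simp), one_mul]

theorem parseval_coef (f : ℝ → ℂ)
    (hf : AEStronglyMeasurable f (volume.restrict (Ioc 0 (2 * π))))
    (hfin : ∫⁻ x in Ioc (0:ℝ) (2 * π), ENNReal.ofReal (‖f x‖ ^ 2) ≠ ⊤) :
    ∑' n : ℤ, ENNReal.ofReal (‖coef f n‖ ^ 2) =
      ENNReal.ofReal (2 * π) * ∫⁻ x in Ioc (0:ℝ) (2 * π), ENNReal.ofReal (‖f x‖ ^ 2) := by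
  have hInt : Integrable (fun x => ‖f x‖ ^ 2) (volume.restrict (Ioc 0 (2 * π))) := by
    refine ⟨hf.norm.pow 2, ?_⟩
    rw [hasFiniteIntegral_iff_ofReal (Eventually.of_forall fun x => by positivity)]
    exact lt_of_le_of_ne le_top hfin
  have hL2 : MemLp f 2 (volume.restrict (Ioc 0 (2 * π))) :=
    (memLp_two_iff_integrable_sq_norm hf).2 hInt
  have hs := (hasSum_sq_fourierCoeffOn Real.two_pi_pos hL2).mul_left ((2 * π) ^ 2)
  rw [← ofReal_integral_eq_lintegral_ofReal hInt (Eventually.of_forall fun x => by positivity),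
    ← ENNReal.ofReal_mul Real.two_pi_pos.le, ← intervalIntegral.integral_of_le Real.two_pi_pos.le]
  have e1 : ∀ n : ℤ, ‖coef f n‖ ^ 2 = (2 * π) ^ 2 * ‖fourierCoeffOn Real.two_pi_pos f n‖ ^ 2 := by
    intro n
    rw [coef_eq, norm_mul, mul_pow, Complex.norm_real, Real.norm_eq_abs, sq_abs]
  simp_rw [e1]
  rw [← ENNReal.ofReal_tsum_of_nonneg (fun n => by positivity) hs.summable, hs.tsum_eq]
  congr 1
  rw [smul_eq_mul, sub_zero]
  have := Real.pi_ne_zero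
  field_simp

theorem coef_eq_zero_of_not_aesm (f : ℝ → ℂ)
    (hf : ¬ AEStronglyMeasurable f (volume.restrict (Ioc 0 (2 * π)))) (n : ℤ) :
    coef f n = 0 := by
  rw [coef, intervalIntegral.integral_of_le Real.two_pi_pos.le]
  apply integral_undef
  intro hInt
  apply hf
  have hc : Continuous fun x : ℝ => Complex.exp (Complex.I * (((n : ℝ) * x : ℝ) : ℂ)) := by
    fun_prop
  refine (hc.aestronglyMeasurable.mul hInt.aestronglyMeasurable).congr
    (Eventually.of_forall fun x => ?_)
  simp only [Pi.mul_apply]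
  rw [← mul_assoc, ← Complex.exp_add]
  simp

/-- Bessel's inequality for an arbitrary `f`: without measurability all coefficients vanish, being
Bochner integrals of non-measurable functions. -/
theorem bessel_coef (f : ℝ → ℂ) :
    ∑' n : ℤ, ENNReal.ofReal (‖coef f n‖ ^ 2) ≤
      ENNReal.ofReal (2 * π) * ∫⁻ x in Ioc (0:ℝ) (2 * π), ENNReal.ofReal (‖f x‖ ^ 2) := by
  by_cases hf : AEStronglyMeasurable f (volume.restrict (Ioc 0 (2 * π)))
  · by_cases hfin : ∫⁻ x in Ioc (0:ℝ) (2 * π), ENNReal.ofReal (‖f x‖ ^ 2) = ⊤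
    · rw [hfin, ENNReal.mul_top (by simp [Real.pi_pos])]
      exact le_top
    · exact (parseval_coef f hf hfin).le
  · simp [coef_eq_zero_of_not_aesm f hf]

theorem fCoeff2_eq_coef (φ : ℝ → ℝ → ℂ) (k : ℤ × ℤ) :
    fCoeff2 φ k = coef (fun x1 => coef (φ x1) k.2) k.1 := by
  simp only [fCoeff2, coef]
  congr 1
  ext x1
  rw [← intervalIntegral.integral_const_mul]
  congr 1
  ext x2
  rw [← mul_assoc, ← Complex.exp_add]
  congr 2
  push_cast
  ring

/-- Bessel's inequality on `𝕋²` for an arbitrary `φ`. The partial coefficients `F n` that fail to be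
measurable contribute nothing and are replaced by `0`, so that sum and integral may be exchanged
even though `φ` itself is not assumed measurable. -/
theorem bessel_fCoeff2 (φ : ℝ → ℝ → ℂ) :
    ∑' k : ℤ × ℤ, ENNReal.ofReal (‖fCoeff2 φ k‖ ^ 2) ≤
      ENNReal.ofReal (2 * π) * (ENNReal.ofReal (2 * π) *
        ∫⁻ x1 in Ioc (0:ℝ) (2 * π), ∫⁻ x2 in Ioc (0:ℝ) (2 * π),
          ENNReal.ofReal (‖φ x1 x2‖ ^ 2)) := by
  classical
  set μ := volume.restrict (Ioc (0:ℝ) (2 * π)) with hμ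
  let F : ℤ → ℝ → ℂ := fun n x1 =>
    if AEStronglyMeasurable (fun y => coef (φ y) n) μ then coef (φ x1) n else 0
  have hFm : ∀ n, AEStronglyMeasurable (F n) μ := by
    intro n
    by_cases h : AEStronglyMeasurable (fun y => coef (φ y) n) μ
    · simp [F, h]
    · simp [F, h, aestronglyMeasurable_const]
  have hFc : ∀ n m, coef (fun x1 => coef (φ x1) n) m = coef (F n) m := by
    intro n m
    by_cases h : AEStronglyMeasurable (fun y => coef (φ y) n) μ
    · simp [F, h]
    · have h0 : F n = 0 := by ext; simp [F, h]
      rw [coef_eq_zero_of_not_aesm _ h, h0]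
      simp [coef]
  have hFle : ∀ n x, ‖F n x‖ ≤ ‖coef (φ x) n‖ := by
    intro n x
    by_cases h : AEStronglyMeasurable (fun y => coef (φ y) n) μ <;> simp [F, h]
  calc ∑' k : ℤ × ℤ, ENNReal.ofReal (‖fCoeff2 φ k‖ ^ 2)
      = ∑' n : ℤ, ∑' m : ℤ, ENNReal.ofReal (‖coef (F n) m‖ ^ 2) := by
        rw [ENNReal.tsum_prod', ENNReal.tsum_comm]
        simp_rw [fCoeff2_eq_coef, hFc]
    _ ≤ ∑' n : ℤ, ENNReal.ofReal (2 * π) * ∫⁻ x, ENNReal.ofReal (‖F n x‖ ^ 2) ∂μ :=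
        ENNReal.tsum_le_tsum fun n => bessel_coef (F n)
    _ = ENNReal.ofReal (2 * π) * ∫⁻ x, ∑' n : ℤ, ENNReal.ofReal (‖F n x‖ ^ 2) ∂μ := by
        rw [ENNReal.tsum_mul_left, lintegral_tsum]
        exact fun n => ((hFm n).norm.pow 2).aemeasurable.ennreal_ofReal
    _ ≤ ENNReal.ofReal (2 * π) * ∫⁻ x, ENNReal.ofReal (2 * π) *
          (∫⁻ x2, ENNReal.ofReal (‖φ x x2‖ ^ 2) ∂μ) ∂μ := by
        gcongr with x
        refine le_trans ?_ (bessel_coef (φ x))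
        gcongr
        exact hFle _ _
    _ = _ := by rw [lintegral_const_mul' _ _ ENNReal.ofReal_ne_top]

/-! ### Trigonometric polynomials -/

theorem integral_exp_int (n : ℤ) :
    ∫ x in (0:ℝ)..(2 * π), Complex.exp (Complex.I * (((n : ℝ) * x : ℝ) : ℂ)) =
      if n = 0 then ((2 * π : ℝ) : ℂ) else 0 := by
  split_ifs with h
  · subst h; simp
  · have hc : Complex.I * (n : ℂ) ≠ 0 := mul_ne_zero Complex.I_ne_zero (by exact_mod_cast h)
    have : ∀ x : ℝ, Complex.exp (Complex.I * (((n : ℝ) * x : ℝ) : ℂ)) =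
        Complex.exp (Complex.I * (n : ℂ) * (x : ℂ)) := by
      intro x; congr 1; push_cast; ring
    simp_rw [this]
    rw [integral_exp_mul_complex hc]
    have h2 : Complex.exp (Complex.I * (n : ℂ) * ((2 * π : ℝ) : ℂ)) = 1 := by
      rw [Complex.exp_eq_one_iff]
      exact ⟨n, by push_cast; ring⟩
    rw [h2]; simp

theorem coef_trig {ι : Type*} (J : Finset ι) (h : ι → ℤ) (b : ι → ℂ) (n : ℤ) :
    coef (fun x => ∑ m ∈ J, b m * Complex.exp (Complex.I * (((h m : ℝ) * x : ℝ) : ℂ))) n =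
      ((2 * π : ℝ) : ℂ) * ∑ m ∈ J with h m = n, b m := by
  have e : ∀ x : ℝ, Complex.exp (-Complex.I * (((n : ℝ) * x : ℝ) : ℂ)) *
      ∑ m ∈ J, b m * Complex.exp (Complex.I * (((h m : ℝ) * x : ℝ) : ℂ)) =
      ∑ m ∈ J, b m * Complex.exp (Complex.I * ((((h m - n : ℤ) : ℝ) * x : ℝ) : ℂ)) := by
    intro x
    rw [Finset.mul_sum]
    refine Finset.sum_congr rfl fun m _ => ?_
    rw [mul_left_comm, ← Complex.exp_add]
    congr 2
    push_cast
    ring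
  simp only [coef, e]
  rw [intervalIntegral.integral_finsetSum
    (fun m _ => (Continuous.intervalIntegrable (by fun_prop) _ _))]
  simp_rw [intervalIntegral.integral_const_mul, integral_exp_int]
  rw [Finset.mul_sum, Finset.sum_filter]
  refine Finset.sum_congr rfl fun m _ => ?_
  simp only [sub_eq_zero]
  split_ifs <;> ring

theorem lintegral_trig {ι : Type*} (J : Finset ι) (h : ι → ℤ) (b : ι → ℂ) :
    ∫⁻ x in Ioc (0:ℝ) (2 * π), ENNReal.ofReal
        (‖∑ m ∈ J, b m * Complex.exp (Complex.I * (((h m : ℝ) * x : ℝ) : ℂ))‖ ^ 2) =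
      ENNReal.ofReal (2 * π) * ∑' n : ℤ, ENNReal.ofReal (‖∑ m ∈ J with h m = n, b m‖ ^ 2) := by
  set f : ℝ → ℂ := fun x => ∑ m ∈ J, b m * Complex.exp (Complex.I * (((h m : ℝ) * x : ℝ) : ℂ))
    with hf
  have hfc : Continuous f := by fun_prop
  have hfin : ∫⁻ x in Ioc (0:ℝ) (2 * π), ENNReal.ofReal (‖f x‖ ^ 2) ≠ ⊤ := by
    have hi : IntegrableOn (fun x => ‖f x‖ ^ 2) (Ioc 0 (2 * π)) :=
      ((hfc.norm.pow 2).integrableOn_Icc (a := 0) (b := 2 * π)).mono_set Ioc_subset_Icc_self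
    have := hi.2
    rw [hasFiniteIntegral_iff_ofReal (Eventually.of_forall fun x => by positivity)] at this
    exact this.ne
  have hp := parseval_coef f hfc.aestronglyMeasurable hfin
  have e : ∀ n : ℤ, ENNReal.ofReal (‖coef f n‖ ^ 2) = ENNReal.ofReal (2 * π) *
      (ENNReal.ofReal (2 * π) * ENNReal.ofReal (‖∑ m ∈ J with h m = n, b m‖ ^ 2)) := by
    intro n
    rw [hf, coef_trig, norm_mul, mul_pow, Complex.norm_real, Real.norm_eq_abs, sq_abs,
      ← ENNReal.ofReal_mul Real.two_pi_pos.le, ← ENNReal.ofReal_mul Real.two_pi_pos.le]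
    congr 1
    ring
  simp_rw [e] at hp
  rw [ENNReal.tsum_mul_left, ENNReal.tsum_mul_left,
    ENNReal.mul_right_inj (by simp [Real.pi_pos]) ENNReal.ofReal_ne_top] at hp
  exact hp.symm

theorem tsum_fiber {ι : Type*} (J : Finset ι) (h : ι → ℤ) (a : ι → ℝ≥0∞) :
    ∑' n : ℤ, ∑ m ∈ J with h m = n, a m = ∑ m ∈ J, a m := by
  simp_rw [Finset.sum_filter]
  rw [Summable.tsum_finsetSum fun _ _ => ENNReal.summable]
  refine Finset.sum_congr rfl fun m _ => ?_
  rw [tsum_eq_single (h m) (fun n hn => by simp [hn.symm])]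
  simp

/-- The character `e^{inx}`. -/
def ech (n : ℤ) (x : ℝ) : ℂ := Complex.exp (Complex.I * (((n : ℝ) * x : ℝ) : ℂ))

theorem continuous_ech (n : ℤ) : Continuous (ech n) := by
  unfold ech; fun_prop

/-- The `L²(𝕋³)` norm of a trigonometric polynomial whose exponents have multiplicity at most `D`:
Parseval in each variable, then Cauchy-Schwarz on each fibre of the frequency map. -/
theorem lintegral_trig3_le {ι : Type*} (J : Finset ι) (h0 h1 h2 : ι → ℤ) (b : ι → ℂ)
    (D : ℝ) (hD : ∀ n0 n1 n2 : ℤ,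
      ((J.filter fun m => h2 m = n2 ∧ h1 m = n1 ∧ h0 m = n0).card : ℝ) ≤ D) :
    ∫⁻ s in Ioc (0:ℝ) (2 * π), ∫⁻ x1 in Ioc (0:ℝ) (2 * π), ∫⁻ x2 in Ioc (0:ℝ) (2 * π),
      ENNReal.ofReal
        (‖∑ m ∈ J, b m * ech (h0 m) s * ech (h1 m) x1 * ech (h2 m) x2‖ ^ 2) ≤
      ENNReal.ofReal (2 * π) ^ 3 * (ENNReal.ofReal D * ∑ m ∈ J, ENNReal.ofReal (‖b m‖ ^ 2)) := by
  have hmeas : ∀ (J : Finset ι) (h : ι → ℤ) (b : ι → ℂ),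
      AEMeasurable (fun x => ENNReal.ofReal (‖∑ m ∈ J, b m * ech (h m) x‖ ^ 2))
        (volume.restrict (Ioc (0:ℝ) (2 * π))) := by
    intro J h b
    have : Continuous fun x => ‖∑ m ∈ J, b m * ech (h m) x‖ ^ 2 := by
      have := fun m => continuous_ech (h m)
      fun_prop
    exact this.measurable.ennreal_ofReal.aemeasurable
  have hL : ∀ (J : Finset ι) (h : ι → ℤ) (b : ι → ℂ),
      ∫⁻ x in Ioc (0:ℝ) (2 * π), ENNReal.ofReal (‖∑ m ∈ J, b m * ech (h m) x‖ ^ 2) =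
      ENNReal.ofReal (2 * π) * ∑' n : ℤ, ENNReal.ofReal (‖∑ m ∈ J with h m = n, b m‖ ^ 2) :=
    fun J h b => lintegral_trig J h b
  have hc := ENNReal.ofReal_ne_top (r := 2 * π)
  have hstep1 : ∀ s : ℝ, ∫⁻ x1 in Ioc (0:ℝ) (2 * π), ∫⁻ x2 in Ioc (0:ℝ) (2 * π),
      ENNReal.ofReal
        (‖∑ m ∈ J, b m * ech (h0 m) s * ech (h1 m) x1 * ech (h2 m) x2‖ ^ 2) =
      ENNReal.ofReal (2 * π) * ∑' n2 : ℤ, (ENNReal.ofReal (2 * π) * ∑' n1 : ℤ,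
        ENNReal.ofReal (‖∑ m ∈ (J.filter fun m => h2 m = n2).filter fun m => h1 m = n1,
          b m * ech (h0 m) s‖ ^ 2)) := by
    intro s
    simp_rw [hL]
    rw [lintegral_const_mul' _ _ hc, lintegral_tsum (fun n2 => hmeas _ _ _)]
    simp_rw [hL]
  simp_rw [hstep1, ENNReal.tsum_mul_left]
  rw [lintegral_const_mul' _ _ hc, lintegral_const_mul' _ _ hc,
    lintegral_tsum (fun n2 => AEMeasurable.tsum fun n1 => hmeas _ _ _)]
  simp_rw [lintegral_tsum (fun n1 => hmeas _ _ _), hL, ENNReal.tsum_mul_left]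
  rw [pow_succ, pow_two, mul_assoc, mul_assoc]
  gcongr
  have hcs : ∀ n2 n1 n0 : ℤ, ENNReal.ofReal (‖∑ m ∈ ((J.filter fun m => h2 m = n2).filter
        fun m => h1 m = n1).filter fun m => h0 m = n0, b m‖ ^ 2) ≤
      ENNReal.ofReal D * ∑ m ∈ ((J.filter fun m => h2 m = n2).filter
        fun m => h1 m = n1).filter fun m => h0 m = n0, ENNReal.ofReal (‖b m‖ ^ 2) := by
    intro n2 n1 n0
    have hc := hD n0 n1 n2
    rw [Finset.filter_filter, Finset.filter_filter]
    set T := J.filter fun m => h2 m = n2 ∧ h1 m = n1 ∧ h0 m = n0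
    have hD0 : 0 ≤ D := le_trans (by positivity) hc
    rw [← ENNReal.ofReal_sum_of_nonneg (fun m _ => by positivity), ← ENNReal.ofReal_mul hD0]
    apply ENNReal.ofReal_le_ofReal
    calc ‖∑ m ∈ T, b m‖ ^ 2 ≤ (∑ m ∈ T, ‖b m‖) ^ 2 := by gcongr; exact norm_sum_le _ _
      _ ≤ T.card * ∑ m ∈ T, ‖b m‖ ^ 2 := sq_sum_le_card_mul_sum_sq
      _ ≤ _ := by gcongr
  refine (ENNReal.tsum_le_tsum fun n2 => ENNReal.tsum_le_tsum fun n1 =>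
    ENNReal.tsum_le_tsum fun n0 => hcs n2 n1 n0).trans ?_
  simp_rw [ENNReal.tsum_mul_left, tsum_fiber]
  exact le_rfl

/-! ### The estimate -/

theorem ech_add (m n : ℤ) (x : ℝ) : ech (m + n) x = ech m x * ech n x := by
  simp only [ech, ← Complex.exp_add]
  congr 1
  push_cast
  ring

theorem ech_add_two_pi_mul (n j : ℤ) (x : ℝ) : ech n (x + 2 * π * j) = ech n x := by
  simp only [ech]
  rw [Complex.exp_eq_exp_iff_exists_int]
  exact ⟨n * j, by push_cast; ring⟩

/-- Fibres of `(k, l) ↦ (k + l, |k|² + |l|²)` inject via `k - l` into a circle of lattice points,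
because `|k - l|² = 2 (|k|² + |l|²) - |k + l|²` is constant on the fibre. -/
theorem fiber_card_le (K : Finset (ℤ × ℤ)) (N C δ : ℝ) (hN : 1 ≤ N) (hC : 0 < C)
    (hK : ∀ k ∈ K, (k.1 : ℝ) ^ 2 + (k.2 : ℝ) ^ 2 ≤ N ^ 2)
    (hcount : ∀ (n : ℕ) (X : ℝ), 1 ≤ X → (n : ℝ) ≤ X →
      ((normSet n).ncard : ℝ) ≤ C * X ^ δ) (n0 n1 n2 : ℤ) :
    (((K ×ˢ K).filter fun m => m.1.2 + m.2.2 = n2 ∧ m.1.1 + m.2.1 = n1 ∧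
      -(m.1.1 ^ 2 + m.1.2 ^ 2) + -(m.2.1 ^ 2 + m.2.2 ^ 2) = n0).card : ℝ) ≤
      C * (4 * N ^ 2) ^ δ := by
  set T := (K ×ˢ K).filter fun m => m.1.2 + m.2.2 = n2 ∧ m.1.1 + m.2.1 = n1 ∧
      -(m.1.1 ^ 2 + m.1.2 ^ 2) + -(m.2.1 ^ 2 + m.2.2 ^ 2) = n0 with hT
  rcases T.eq_empty_or_nonempty with h0 | ⟨q, hq⟩
  · rw [h0]
    simp only [Finset.card_empty, Nat.cast_zero]
    positivity
  · obtain ⟨hqK, hq2, hq1, hq0⟩ := Finset.mem_filter.1 hq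
    obtain ⟨hqk, hql⟩ := Finset.mem_product.1 hqK
    set n : ℕ := ((q.1.1 - q.2.1) ^ 2 + (q.1.2 - q.2.2) ^ 2).toNat with hn
    have hnZ : (n : ℤ) = (q.1.1 - q.2.1) ^ 2 + (q.1.2 - q.2.2) ^ 2 :=
      Int.toNat_of_nonneg (by positivity)
    have hnX : (n : ℝ) ≤ 4 * N ^ 2 := by
      have e : (n : ℝ) = ((q.1.1 : ℝ) - q.2.1) ^ 2 + ((q.1.2 : ℝ) - q.2.2) ^ 2 := by
        exact_mod_cast hnZ
      rw [e]
      nlinarith [hK _ hqk, hK _ hql, sq_nonneg ((q.1.1 : ℝ) + q.2.1),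
        sq_nonneg ((q.1.2 : ℝ) + q.2.2)]
    refine le_trans ?_ (hcount n (4 * N ^ 2) (by nlinarith) hnX)
    have := Set.ncard_le_ncard_of_injOn (s := (T : Set ((ℤ × ℤ) × (ℤ × ℤ)))) (t := normSet n)
      (fun m => (⟨m.1.1 - m.2.1, m.1.2 - m.2.2⟩ : GaussianInt)) ?_ ?_ (normSet_finite n)
    · rw [Set.ncard_coe_finset] at this
      exact_mod_cast this
    · intro m hm
      obtain ⟨-, hm2, hm1, hm0⟩ := Finset.mem_filter.1 (Finset.mem_coe.1 hm)
      simp only [normSet, Set.mem_ofPred_eq, Zsqrtd.norm_def]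
      rw [hnZ]
      have a1 : (m.1.1 + m.2.1) ^ 2 = (q.1.1 + q.2.1) ^ 2 := by rw [hm1, hq1]
      have a2 : (m.1.2 + m.2.2) ^ 2 = (q.1.2 + q.2.2) ^ 2 := by rw [hm2, hq2]
      linarith
    · intro m hm m' hm' heq
      obtain ⟨-, hm2, hm1, -⟩ := Finset.mem_filter.1 (Finset.mem_coe.1 hm)
      obtain ⟨-, hm2', hm1', -⟩ := Finset.mem_filter.1 (Finset.mem_coe.1 hm')
      have e1 := congrArg Zsqrtd.re heq
      have e2 := congrArg Zsqrtd.im heq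
      simp only at e1 e2
      ext <;> omega

/-- The free evolution with frequencies in `K`, evaluated at rescaled time `s = g(t)`. -/
def evol (K : Finset (ℤ × ℤ)) (c : ℤ × ℤ → ℂ) (s x1 x2 : ℝ) : ℂ :=
  ∑ k ∈ K, c k * ech (-(k.1 ^ 2 + k.2 ^ 2)) s * ech k.1 x1 * ech k.2 x2

theorem evol_sq (K : Finset (ℤ × ℤ)) (c : ℤ × ℤ → ℂ) (s x1 x2 : ℝ) :
    evol K c s x1 x2 ^ 2 = ∑ m ∈ K ×ˢ K, (c m.1 * c m.2) *
      ech (-(m.1.1 ^ 2 + m.1.2 ^ 2) + -(m.2.1 ^ 2 + m.2.2 ^ 2)) s *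
      ech (m.1.1 + m.2.1) x1 * ech (m.1.2 + m.2.2) x2 := by
  rw [sq, evol, Finset.sum_mul_sum, ← Finset.sum_product']
  refine Finset.sum_congr rfl fun m _ => ?_
  simp only [ech_add]
  ring

/-- The `L⁴(𝕋³)` estimate over one period of the rescaled time. -/
theorem lintegral_evol_le (K : Finset (ℤ × ℤ)) (c : ℤ × ℤ → ℂ) (N C δ : ℝ) (hN : 1 ≤ N)
    (hC : 0 < C) (hK : ∀ k ∈ K, (k.1 : ℝ) ^ 2 + (k.2 : ℝ) ^ 2 ≤ N ^ 2)
    (hcount : ∀ (n : ℕ) (X : ℝ), 1 ≤ X → (n : ℝ) ≤ X →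
      ((normSet n).ncard : ℝ) ≤ C * X ^ δ) :
    ∫⁻ s in Ioc (0:ℝ) (2 * π), ∫⁻ x1 in Ioc (0:ℝ) (2 * π), ∫⁻ x2 in Ioc (0:ℝ) (2 * π),
      ENNReal.ofReal (‖evol K c s x1 x2‖ ^ 4) ≤
    ENNReal.ofReal (2 * π) ^ 3 * (ENNReal.ofReal (C * (4 * N ^ 2) ^ δ) *
      (∑ k ∈ K, ENNReal.ofReal (‖c k‖ ^ 2)) ^ 2) := by
  have e : ∀ s x1 x2, ‖evol K c s x1 x2‖ ^ 4 = ‖evol K c s x1 x2 ^ 2‖ ^ 2 := by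
    intro s x1 x2; rw [norm_pow, ← pow_mul]
  simp_rw [e, evol_sq]
  refine (lintegral_trig3_le (K ×ˢ K) _ _ _ _ _
    (fiber_card_le K N C δ hN hC hK hcount)).trans (le_of_eq ?_)
  congr 2
  rw [sq, Finset.sum_mul_sum, ← Finset.sum_product']
  refine Finset.sum_congr rfl fun m _ => ?_
  rw [norm_mul, mul_pow, ENNReal.ofReal_mul (by positivity)]

/-- A bounded window of a `2π`-periodic function is covered by finitely many periods. -/
theorem lintegral_periodic_le (H : ℝ → ℝ≥0∞) (hH : ∀ (s : ℝ) (j : ℤ), H (s + 2 * π * j) = H s)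
    (M : ℕ) (S : Set ℝ) (hS : S ⊆ Ioc (-(2 * π * M)) (2 * π * M)) :
    ∫⁻ s in S, H s ≤ (2 * M : ℕ) * ∫⁻ s in Ioc (0:ℝ) (2 * π), H s := by
  have hone : ∀ j : ℤ, ∫⁻ s in Ioc (2 * π * j) (2 * π * j + 2 * π), H s =
      ∫⁻ s in Ioc (0:ℝ) (2 * π), H s := by
    intro j
    have h := (measurePreserving_add_right volume (2 * π * (j : ℝ))).setLIntegral_comp_preimage_emb
      (measurableEmbedding_addRight _) H (Ioc (2 * π * j) (2 * π * j + 2 * π))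
    rw [← h]
    simp only [hH]
    congr 2
    ext x
    simp only [mem_preimage, mem_Ioc]
    constructor <;> rintro ⟨h1, h2⟩ <;> constructor <;> linarith
  have hcover : S ⊆ ⋃ j ∈ Finset.Ico (-(M : ℤ)) M,
      Ioc (2 * π * (j : ℝ)) (2 * π * j + 2 * π) := by
    intro s hs
    obtain ⟨h1, h2⟩ := hS hs
    have hpi := Real.two_pi_pos
    obtain ⟨j, hj, -⟩ := existsUnique_add_zsmul_mem_Ioc hpi s 0
    rw [zsmul_eq_mul, zero_add] at hj
    obtain ⟨hj1, hj2⟩ := hj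
    simp only [mem_iUnion, Finset.mem_Ico]
    refine ⟨-j, ⟨?_, ?_⟩, ?_⟩
    · have : ((j : ℝ)) < M + 1 := by
        by_contra! hc
        nlinarith
      have : j < (M : ℤ) + 1 := by exact_mod_cast this
      omega
    · have : -(M : ℝ) < j := by
        by_contra! hc
        nlinarith
      have : -(M : ℤ) < j := by exact_mod_cast this
      omega
    · push_cast
      constructor <;> nlinarith
  calc ∫⁻ s in S, H s
      ≤ ∫⁻ s in ⋃ j ∈ Finset.Ico (-(M : ℤ)) M, Ioc (2 * π * (j : ℝ)) (2 * π * j + 2 * π), H s :=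
        lintegral_mono_set hcover
    _ ≤ ∑ j ∈ Finset.Ico (-(M : ℤ)) M, ∫⁻ s in Ioc (2 * π * (j : ℝ)) (2 * π * j + 2 * π), H s := by
        have h := lintegral_iUnion_le (μ := volume) (fun j : Finset.Ico (-(M : ℤ)) M =>
          Ioc (2 * π * ((j : ℤ) : ℝ)) (2 * π * ((j : ℤ) : ℝ) + 2 * π)) H
        rw [tsum_fintype, Finset.sum_coe_sort (Finset.Ico (-(M : ℤ)) M) (fun j : ℤ =>
          ∫⁻ s in Ioc (2 * π * (j : ℝ)) (2 * π * j + 2 * π), H s), iUnion_subtype] at h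
        exact h
    _ = _ := by
        simp_rw [hone]
        rw [Finset.sum_const, nsmul_eq_mul]
        congr 2
        simp
        omega

theorem Sop2_eq_evol (g : ℝ → ℝ) (φ : ℝ → ℝ → ℂ) (K : Finset (ℤ × ℤ))
    (hK : ∀ k ∉ K, fCoeff2 φ k = 0) (t x1 x2 : ℝ) :
    Sop2 g φ t x1 x2 = evol K (fCoeff2 φ) (g t) x1 x2 := by
  rw [Sop2, tsum_eq_sum (s := K) (fun k hk => by rw [hK k hk, mul_zero]), evol]
  refine Finset.sum_congr rfl fun k _ => ?_
  rw [mul_comm _ (fCoeff2 φ k), mul_assoc, mul_assoc, ← mul_assoc]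
  simp only [ech, ← Complex.exp_add, mul_assoc]
  congr 2
  push_cast
  ring

/-- Frequency-localized weighted `L⁴` Strichartz estimate on `𝕋²`:
for `φ_N ∈ L²(𝕋²)` with `supp φ̂_N ⊆ B(0,N)` and a finite interval `I` centered at `0`,
`‖g'(t)^{1/4} S(t)φ_N‖_{L⁴(I×𝕋²)} ≤ C(ε,I) N^ε ‖φ_N‖_{L²(𝕋²)}`. -/
theorem weighted_L4_Strichartz_frequency_localized
    (g : ℝ → ℝ) (hg_smooth : ContDiff ℝ (⊤ : ℕ∞) g) (hg_mono : StrictMono g)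
    (hg0 : g 0 = 0) (hg'0 : deriv g 0 = 0) :
    ∀ ε : ℝ, 0 < ε → ∀ r : ℝ, 0 < r →
      ∃ C : ℝ, 0 < C ∧ ∀ N : ℝ, 1 ≤ N →
        ∀ φ : ℝ → ℝ → ℂ, Periodic2 φ → LpT2 2 φ < ⊤ →
          (∀ k : ℤ × ℤ, N < zAbs2 k → fCoeff2 φ k = 0) →
          LpIT2 4 (Icc (-r) r)
              (fun t x1 x2 => ((deriv g t ^ ((1:ℝ)/4) : ℝ) : ℂ) * Sop2 g φ t x1 x2) ≤
            ENNReal.ofReal (C * N ^ ε) * LpT2 2 φ := by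
  intro ε hε r hr
  obtain ⟨C₀, hC₀, hcount⟩ := exists_normSet_ncard_le_of_le (2 * ε) (by positivity)
  obtain ⟨M, hM⟩ : ∃ M : ℕ, |g (-r)| + |g r| < 2 * π * M := by
    obtain ⟨M, hM⟩ := exists_nat_gt ((|g (-r)| + |g r|) / (2 * π))
    refine ⟨M, ?_⟩
    rw [div_lt_iff₀ Real.two_pi_pos] at hM
    linarith
  have hM0 : 0 < (M : ℝ) := by
    by_contra! hc
    have := abs_nonneg (g (-r))
    have := abs_nonneg (g r)
    nlinarith [Real.two_pi_pos]
  set B : ℝ := (2 * M) * ((2 * π) ^ 3 * (C₀ * (4 : ℝ) ^ (2 * ε) * (2 * π) ^ 4)) with hB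
  have hBpos : 0 < B := by positivity
  refine ⟨B ^ ((1:ℝ)/4), by positivity, fun N hN φ _ _ hsupp => ?_⟩
  have hNpos : 0 < N := by linarith
  -- the finite set of frequencies in the ball of radius `N`
  set K : Finset (ℤ × ℤ) := (Finset.Icc (-⌈N⌉) ⌈N⌉ ×ˢ Finset.Icc (-⌈N⌉) ⌈N⌉).filter
    fun k => (k.1 : ℝ) ^ 2 + (k.2 : ℝ) ^ 2 ≤ N ^ 2 with hKdef
  have hK : ∀ k ∈ K, (k.1 : ℝ) ^ 2 + (k.2 : ℝ) ^ 2 ≤ N ^ 2 := fun k hk =>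
    (Finset.mem_filter.1 hk).2
  have hKc : ∀ k ∉ K, fCoeff2 φ k = 0 := by
    intro k hk
    apply hsupp
    by_contra! hle
    apply hk
    have hsq : (k.1 : ℝ) ^ 2 + (k.2 : ℝ) ^ 2 ≤ N ^ 2 := (Real.sqrt_le_left hNpos.le).1 hle
    have hbox : ∀ j : ℤ, (j : ℝ) ^ 2 ≤ N ^ 2 → j ∈ Finset.Icc (-⌈N⌉) ⌈N⌉ := by
      intro j hj
      have h1 := abs_le.1 (abs_le_of_sq_le_sq hj hNpos.le)
      have h2 := Int.le_ceil N
      rw [Finset.mem_Icc]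
      constructor
      · have : ((-⌈N⌉ : ℤ) : ℝ) ≤ j := by push_cast; linarith [h1.1]
        exact_mod_cast this
      · have : (j : ℝ) ≤ (⌈N⌉ : ℤ) := by linarith [h1.2]
        exact_mod_cast this
    rw [hKdef, Finset.mem_filter, Finset.mem_product]
    exact ⟨⟨hbox _ (by nlinarith [sq_nonneg (k.2 : ℝ)]),
      hbox _ (by nlinarith [sq_nonneg (k.1 : ℝ)])⟩, hsq⟩
  set c := fCoeff2 φ with hc
  set H : ℝ → ℝ≥0∞ := fun s => ∫⁻ x1 in Ioc (0:ℝ) (2 * π), ∫⁻ x2 in Ioc (0:ℝ) (2 * π),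
    ENNReal.ofReal (‖evol K c s x1 x2‖ ^ 4) with hH
  set L : ℝ≥0∞ := ∫⁻ x1 in Ioc (0:ℝ) (2 * π), ∫⁻ x2 in Ioc (0:ℝ) (2 * π),
    ENNReal.ofReal (‖φ x1 x2‖ ^ 2) with hL
  have hLp : LpT2 2 φ = L ^ ((1:ℝ)/2) := by
    simp only [LpT2, hL, Real.rpow_two]
  have hperiod : ∀ (s : ℝ) (j : ℤ), H (s + 2 * π * j) = H s := by
    intro s j
    simp only [hH, evol, ech_add_two_pi_mul]
  have hLHS : ∫⁻ t in Icc (-r) r, ∫⁻ x1 in Ioc (0:ℝ) (2 * π), ∫⁻ x2 in Ioc (0:ℝ) (2 * π),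
      ENNReal.ofReal (‖((deriv g t ^ ((1:ℝ)/4) : ℝ) : ℂ) * Sop2 g φ t x1 x2‖ ^ (4:ℝ)) =
      ∫⁻ t in Icc (-r) r, ENNReal.ofReal |deriv g t| * H (g t) := by
    congr 1
    ext t
    have hd : 0 ≤ deriv g t := hg_mono.monotone.deriv_nonneg
    have e : ∀ x1 x2, ENNReal.ofReal
        (‖((deriv g t ^ ((1:ℝ)/4) : ℝ) : ℂ) * Sop2 g φ t x1 x2‖ ^ (4:ℝ)) =
        ENNReal.ofReal |deriv g t| * ENNReal.ofReal (‖evol K c (g t) x1 x2‖ ^ 4) := by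
      intro x1 x2
      rw [Sop2_eq_evol g φ K hKc, ← ENNReal.ofReal_mul (abs_nonneg _), norm_mul,
        Complex.norm_real, Real.norm_of_nonneg (by positivity),
        Real.mul_rpow (by positivity) (by positivity), ← Real.rpow_mul hd, abs_of_nonneg hd]
      norm_num
      norm_cast
    simp_rw [e, lintegral_const_mul' _ _ ENNReal.ofReal_ne_top, hH]
  -- the weight is exactly the Jacobian of the time change `s = g(t)`
  have hchange : ∫⁻ t in Icc (-r) r, ENNReal.ofReal |deriv g t| * H (g t) =
      ∫⁻ s in g '' Icc (-r) r, H s :=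
    (lintegral_image_eq_lintegral_abs_deriv_mul measurableSet_Icc
      (fun t _ => ((hg_smooth.differentiable (by simp)).differentiableAt.hasDerivAt).hasDerivWithinAt)
      hg_mono.injective.injOn H).symm
  have himage : g '' Icc (-r) r ⊆ Ioc (-(2 * π * M)) (2 * π * M) := by
    rintro _ ⟨t, ht, rfl⟩
    have h1 := hg_mono.monotone ht.1
    have h2 := hg_mono.monotone ht.2
    constructor
    · linarith [neg_abs_le (g (-r)), abs_nonneg (g r)]
    · linarith [le_abs_self (g r), abs_nonneg (g (-r))]
  have hbessel : ∑ k ∈ K, ENNReal.ofReal (‖c k‖ ^ 2) ≤ ENNReal.ofReal ((2 * π) ^ 2) * L := by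
    refine (ENNReal.sum_le_tsum K).trans ((bessel_fCoeff2 φ).trans (le_of_eq ?_))
    rw [← mul_assoc, ← ENNReal.ofReal_mul Real.two_pi_pos.le, ← sq]
  have hmain : ∫⁻ s in g '' Icc (-r) r, H s ≤ ENNReal.ofReal (B * N ^ (4 * ε)) * L ^ 2 := by
    calc ∫⁻ s in g '' Icc (-r) r, H s
        ≤ (2 * M : ℕ) * ∫⁻ s in Ioc (0:ℝ) (2 * π), H s :=
          lintegral_periodic_le H hperiod M _ himage
      _ ≤ (2 * M : ℕ) * (ENNReal.ofReal (2 * π) ^ 3 *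
            (ENNReal.ofReal (C₀ * (4 * N ^ 2) ^ (2 * ε)) *
              (ENNReal.ofReal ((2 * π) ^ 2) * L) ^ 2)) := by
          gcongr
          refine (lintegral_evol_le K c N C₀ (2 * ε) hN hC₀ hK hcount).trans ?_
          gcongr
      _ = ENNReal.ofReal (B * N ^ (4 * ε)) * L ^ 2 := by
          have hNe : (4 * N ^ 2) ^ (2 * ε) = (4 : ℝ) ^ (2 * ε) * N ^ (4 * ε) := by
            rw [Real.mul_rpow (by norm_num) (by positivity), ← Real.rpow_natCast N 2,
              ← Real.rpow_mul hNpos.le]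
            congr 2
            push_cast
            ring
          have e1 : ((2 * M : ℕ) : ℝ≥0∞) = ENNReal.ofReal (2 * M) := by
            rw [← ENNReal.ofReal_natCast]; push_cast; rfl
          rw [e1, hNe, mul_pow, ← ENNReal.ofReal_pow (by positivity),
            ← ENNReal.ofReal_pow (by positivity), ← mul_assoc (ENNReal.ofReal (C₀ * _)),
            ← ENNReal.ofReal_mul (by positivity), ← mul_assoc (ENNReal.ofReal ((2 * π) ^ 3)),
            ← ENNReal.ofReal_mul (by positivity), ← mul_assoc,
            ← ENNReal.ofReal_mul (by positivity)]
          congr 2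
          rw [hB]
          ring
  rw [LpIT2, hLHS, hchange, hLp]
  calc (∫⁻ s in g '' Icc (-r) r, H s) ^ ((1:ℝ)/4)
      ≤ (ENNReal.ofReal (B * N ^ (4 * ε)) * L ^ 2) ^ ((1:ℝ)/4) :=
        ENNReal.rpow_le_rpow hmain (by norm_num)
    _ = ENNReal.ofReal (B ^ ((1:ℝ)/4) * N ^ ε) * L ^ ((1:ℝ)/2) := by
        rw [ENNReal.mul_rpow_of_nonneg _ _ (by norm_num),
          ENNReal.ofReal_rpow_of_nonneg (by positivity) (by norm_num),
          Real.mul_rpow hBpos.le (by positivity), ← Real.rpow_mul hNpos.le,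
          ← ENNReal.rpow_natCast, ← ENNReal.rpow_mul, show 4 * ε * (1 / 4) = ε by ring,
          show ((2 : ℕ) : ℝ) * (1 / 4) = 1 / 2 by norm_num]
end
end

section
/- Let g ∈ C^∞(ℝ) be strictly increasing with g(0)=0 and g'(0)=0. Let φ_{N₁}, φ_{N₂} ∈ L²(𝕋²) with N₁ ≥ N₂, whose Fourier coefficients are supported in B(0,N₁) and B(0,N₂) respectively, and let I ⊂ ℝ be a finite interval centered at zero. Then for every ε>0 there is a constant C = C(ε,I), independent of N₁, N₂, φ_{N₁}, φ_{N₂}, such that ‖ g'(t)^{1/2} (S(t)φ_{N₁})(S(t)φ_{N₂}) ‖_{L²(I×𝕋²)} ≤ C min(N₁,N₂)^ε ‖φ_{N₁}‖_{L²(𝕋²)} ‖φ_{N₂}‖_{L²(𝕋²)}. -/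
/-!
The substitution `s = g(t)` absorbs the weight `g'(t)`, so that up to a number of periods depending
only on `g` and `r` the estimate is one for the ordinary Schrödinger flow on the torus
(`time_integral`). The product of the two flows is an exponential sum over pairs `(k, l)`, with
spatial frequency `k + l` and temporal frequency `-(|k|² + |l|²)`. Parseval in `x₂`, `x₁` and `s`,
followed by Cauchy–Schwarz on the sets where all these frequencies are constant
(`spacetime_bound`), bounds the squared norm by `K ∑ |φ̂₁(k)|² ∑ |φ̂₂(l)|²`, where `K` is the
largest size of such a set; Bessel's inequality (`bessel_two`) turns the sums into `L²` norms. The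
functions are not assumed measurable, but Bessel's inequality survives: a Bochner integral of a
non-measurable function vanishes.

It remains to see that `K ≤ C N₂ ^ (2ε)`, with no dependence on `N₁` (`resonance_count`). For fixed
`m = k + l` and `|k|² + |l|²` the point `l ∈ B(0, N₂)` lies on a circle `|2l - m|² = D`. If it
carries at least three admissible points, then `D ≤ 64 N₂ ^ 6`, because a lattice triangle has
area at least `1/2` (`circle_three_points`). For such `D` the number of Gaussian integers of norm
`D` is at most a multiple of the number of divisors of `D` (`card_gaussNorm_le`), which is
`O(D ^ δ)` (`divisor_bound`).
-/

open MeasureTheory Real Set Filter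
open scoped ENNReal NNReal

noncomputable section

/-! ### Lattice points on circles -/

lemma gaussNorm_finite (n : ℤ) : {z : GaussianInt | z.norm = n}.Finite := by
  have h : {z : GaussianInt | z.norm = n} ⊆
      (fun p : ℤ × ℤ => (⟨p.1, p.2⟩ : GaussianInt)) '' (Set.Icc (-n) n ×ˢ Set.Icc (-n) n) := by
    rintro ⟨x, y⟩ hz
    simp only [Set.mem_ofPred_eq, Zsqrtd.norm_def] at hz
    refine ⟨(x, y), ?_, rfl⟩
    simp only [Set.mem_prod, Set.mem_Icc]
    have hx : |x| ≤ x * x := by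
      rcases abs_cases x with ⟨h, _⟩ | ⟨h, _⟩ <;> rw [h] <;> nlinarith
    have hy : |y| ≤ y * y := by
      rcases abs_cases y with ⟨h, _⟩ | ⟨h, _⟩ <;> rw [h] <;> nlinarith
    have hx' : |x| ≤ n := by nlinarith [mul_self_nonneg y]
    have hy' : |y| ≤ n := by nlinarith [mul_self_nonneg x]
    exact ⟨abs_le.1 hx', abs_le.1 hy'⟩
  exact (((Set.finite_Icc _ _).prod (Set.finite_Icc _ _)).image _).subset h

/-- The Gaussian integers of norm `n`, that is, the representations of `n` as a sum of two
squares. -/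
def gaussNorm (n : ℕ) : Finset GaussianInt := (gaussNorm_finite (n : ℤ)).toFinset

lemma mem_gaussNorm {n : ℕ} {z : GaussianInt} : z ∈ gaussNorm n ↔ z.norm = n := by
  simp [gaussNorm]

lemma gauss_prime_of_norm {p : ℕ} (hp : p.Prime) {w : GaussianInt} (hw : w.norm = p) :
    Prime w := by
  apply Irreducible.prime
  refine ⟨fun h => ?_, fun a b hab => ?_⟩
  · have := (Zsqrtd.norm_eq_one_iff).2 h
    rw [hw] at this
    simp at this
    exact hp.one_lt.ne' this
  · have h1 : a.norm.natAbs * b.norm.natAbs = p := by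
      rw [← Int.natAbs_mul, ← Zsqrtd.norm_mul, ← hab, hw]; simp
    have := hp
    rw [← h1, Nat.prime_mul_iff] at this
    rcases this with ⟨_, h⟩ | ⟨_, h⟩
    · exact Or.inr (Zsqrtd.norm_eq_one_iff.1 h)
    · exact Or.inl (Zsqrtd.norm_eq_one_iff.1 h)

/-- If `p = π π̄` splits, every `z` of norm `p ^ a * m` is `π ^ i * π̄ ^ (a - i) * w` with
`N w = m`. -/
lemma gauss_split {p : ℕ} (hp : p.Prime) {w : GaussianInt} (hw : w.norm = p) (m : ℕ) :
    ∀ (a : ℕ) (z : GaussianInt), z.norm = (p ^ a * m : ℕ) →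
      ∃ i ∈ Finset.range (a + 1), ∃ y ∈ gaussNorm m, w ^ i * star w ^ (a - i) * y = z := by
  intro a
  induction a with
  | zero =>
    intro z hz
    exact ⟨0, by simp, z, mem_gaussNorm.2 (by simpa using hz), by simp⟩
  | succ a ih =>
    intro z hz
    have hp0 : (p : ℤ) ≠ 0 := by exact_mod_cast hp.ne_zero
    have hdiv : w ∣ z * star z := by
      rw [← Zsqrtd.norm_eq_mul_conj, hz]
      have : ((p ^ (a + 1) * m : ℕ) : ℤ) = w.norm * (p ^ a * m : ℕ) := by
        rw [hw]; push_cast; ring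
      rw [this, Int.cast_mul, Zsqrtd.norm_eq_mul_conj, mul_assoc]
      exact dvd_mul_right _ _
    rcases (gauss_prime_of_norm hp hw).dvd_or_dvd hdiv with ⟨v, hv⟩ | ⟨v, hv⟩
    · have hvn : v.norm = (p ^ a * m : ℕ) := by
        rw [hv, Zsqrtd.norm_mul, hw] at hz
        apply mul_left_cancel₀ hp0
        rw [hz]; push_cast; ring
      obtain ⟨i, hi, y, hy, h⟩ := ih v hvn
      have hi' := Finset.mem_range.1 hi
      refine ⟨i + 1, Finset.mem_range.2 (by omega), y, hy, ?_⟩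
      rw [hv, ← h, show a + 1 - (i + 1) = a - i by omega]; ring
    · have hz' : z = star w * star v := by
        rw [← star_star z, hv, star_mul]; ring
      have hvn : (star v).norm = (p ^ a * m : ℕ) := by
        rw [hz', Zsqrtd.norm_mul, Zsqrtd.norm_conj, hw] at hz
        apply mul_left_cancel₀ hp0
        rw [hz]; push_cast; ring
      obtain ⟨i, hi, y, hy, h⟩ := ih (star v) hvn
      have hi' := Finset.mem_range.1 hi
      refine ⟨i, Finset.mem_range.2 (by omega), y, hy, ?_⟩
      rw [hz', ← h, show a + 1 - i = (a - i) + 1 by omega]; ring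

/-- If `p` is inert and prime to `m`, every `z` of norm `p ^ a * m` is `p ^ (a / 2) * w` with
`N w = m`. -/
lemma gauss_inert {p : ℕ} (hp : p.Prime) (hP : Prime (p : GaussianInt)) (m : ℕ)
    (hm : ¬ p ∣ m) : ∀ (a : ℕ) (z : GaussianInt), z.norm = (p ^ a * m : ℕ) →
      ∃ y ∈ gaussNorm m, (p : GaussianInt) ^ (a / 2) * y = z := by
  intro a
  induction a using Nat.strong_induction_on with
  | _ a ih =>
  intro z hz
  rcases Nat.eq_zero_or_pos a with rfl | ha
  · exact ⟨z, mem_gaussNorm.2 (by simpa using hz), by simp⟩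
  have hp0 : (p : ℤ) ≠ 0 := by exact_mod_cast hp.ne_zero
  have hdvd : (p : GaussianInt) ∣ z := by
    have : (p : GaussianInt) ∣ z * star z := by
      rw [← Zsqrtd.norm_eq_mul_conj, hz]
      obtain ⟨b, rfl⟩ : ∃ b, a = b + 1 := ⟨a - 1, by omega⟩
      exact ⟨(p ^ b * m : ℕ), by push_cast; ring⟩
    rcases hP.dvd_or_dvd this with h | ⟨v, hv⟩
    · exact h
    · refine ⟨star v, ?_⟩
      rw [← star_star z, hv, star_mul, star_natCast]; ring
  obtain ⟨v, hv⟩ := hdvd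
  have hn : (p : ℤ) * p * v.norm = (p ^ a * m : ℕ) := by
    rw [← hz, hv, Zsqrtd.norm_mul, Zsqrtd.norm_natCast]
  rcases Nat.lt_or_ge a 2 with h2 | h2
  · exfalso
    obtain rfl : a = 1 := by omega
    apply hm
    have : (p : ℤ) * v.norm = m := by
      apply mul_left_cancel₀ hp0
      rw [← mul_assoc, hn]; push_cast; ring
    exact_mod_cast (Dvd.intro _ this)
  · obtain ⟨b, rfl⟩ : ∃ b, a = b + 2 := ⟨a - 2, by omega⟩
    have hvn : v.norm = (p ^ b * m : ℕ) := by
      apply mul_left_cancel₀ (mul_ne_zero hp0 hp0)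
      rw [hn]; push_cast; ring
    obtain ⟨y, hy, h⟩ := ih b (by omega) v hvn
    refine ⟨y, hy, ?_⟩
    rw [hv, ← h, show (b + 2) / 2 = b / 2 + 1 by omega]; ring

lemma card_gaussNorm_prime_pow {p : ℕ} (hp : p.Prime) (a m : ℕ) (hm : ¬ p ∣ m) :
    (gaussNorm (p ^ a * m)).card ≤ (a + 1) * (gaussNorm m).card := by
  classical
  have := Fact.mk hp
  by_cases h4 : p % 4 = 3
  · have hP := GaussianInt.prime_of_nat_prime_of_mod_four_eq_three p h4
    have hsub : gaussNorm (p ^ a * m) ⊆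
        (gaussNorm m).image (fun y => (p : GaussianInt) ^ (a / 2) * y) := by
      intro z hz
      obtain ⟨y, hy, h⟩ := gauss_inert hp hP m hm a z (mem_gaussNorm.1 hz)
      exact Finset.mem_image.2 ⟨y, hy, h⟩
    calc _ ≤ _ := Finset.card_le_card hsub
      _ ≤ (gaussNorm m).card := Finset.card_image_le
      _ ≤ _ := Nat.le_mul_of_pos_left _ (by omega)
  · obtain ⟨x, y, hxy⟩ := Nat.Prime.sq_add_sq h4
    have hw : (⟨x, y⟩ : GaussianInt).norm = p := by
      rw [Zsqrtd.norm_def, ← hxy]; push_cast; ring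
    have hsub : gaussNorm (p ^ a * m) ⊆ (Finset.range (a + 1)).biUnion (fun i =>
        (gaussNorm m).image (fun v =>
          (⟨x, y⟩ : GaussianInt) ^ i * star (⟨x, y⟩ : GaussianInt) ^ (a - i) * v)) := by
      intro z hz
      obtain ⟨i, hi, v, hv, h⟩ := gauss_split hp hw m a z (mem_gaussNorm.1 hz)
      exact Finset.mem_biUnion.2 ⟨i, hi, Finset.mem_image.2 ⟨v, hv, h⟩⟩
    calc _ ≤ _ := Finset.card_le_card hsub
      _ ≤ (Finset.range (a + 1)).card * (gaussNorm m).card :=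
        Finset.card_biUnion_le_card_mul _ _ _ fun i _ => Finset.card_image_le
      _ = _ := by simp

lemma card_gaussNorm_mul (n : ℕ) : 0 < n → ∀ m : ℕ, n.Coprime m →
    (gaussNorm (n * m)).card ≤ n.divisors.card * (gaussNorm m).card := by
  induction n using Nat.recOnPosPrimePosCoprime with
  | prime_pow p a hp ha =>
    intro _ m hm
    rw [Nat.divisors_prime_pow hp, Finset.card_map, Finset.card_range]
    exact card_gaussNorm_prime_pow hp a m
      ((Nat.Prime.coprime_iff_not_dvd hp).1 (Nat.Coprime.coprime_dvd_left (dvd_pow_self p ha.ne') hm))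
  | zero => intro h; omega
  | one => intro _ m _; simp
  | coprime a b ha hb hab iha ihb =>
    intro _ m hm
    have hbm : b.Coprime m := Nat.Coprime.coprime_dvd_left (dvd_mul_left b a) hm
    have ham : a.Coprime m := Nat.Coprime.coprime_dvd_left (dvd_mul_right a b) hm
    rw [hab.card_divisors_mul, mul_assoc, mul_assoc]
    exact (iha (by omega) _ (hab.mul_right ham)).trans
      (Nat.mul_le_mul_left _ (ihb (by omega) _ hbm))

lemma card_gaussNorm_le (n : ℕ) (hn : 0 < n) :
    (gaussNorm n).card ≤ n.divisors.card * (gaussNorm 1).card := by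
  simpa using card_gaussNorm_mul n hn 1 (Nat.coprime_one_right n)

/-- The divisor bound `d(n) ≤ C n ^ δ`. -/
lemma divisor_bound (δ : ℝ) (hδ : 0 < δ) :
    ∃ C : ℝ, 1 ≤ C ∧ ∀ n : ℕ, 0 < n → (n.divisors.card : ℝ) ≤ C * (n : ℝ) ^ δ := by
  -- `K` absorbs the primes below the threshold `P`; beyond it `a + 1 ≤ 2 ^ a ≤ p ^ (a δ)`.
  obtain ⟨K, hK1, hK⟩ : ∃ K : ℝ, 1 ≤ K ∧ ∀ a : ℕ, ((a : ℝ) + 1) ≤ K * (2 : ℝ) ^ (a * δ) := by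
    have hl : 0 < δ * Real.log 2 := mul_pos hδ (Real.log_pos (by norm_num))
    refine ⟨1 + 1 / (δ * Real.log 2), by simp; positivity, fun a => ?_⟩
    have h1 : (2 : ℝ) ^ (a * δ) = Real.exp (a * (δ * Real.log 2)) := by
      rw [Real.rpow_def_of_pos (by norm_num)]; congr 1; ring
    have h2 := Real.add_one_le_exp ((a : ℝ) * (δ * Real.log 2))
    have h3 : (1 : ℝ) ≤ Real.exp (a * (δ * Real.log 2)) := Real.one_le_exp (by positivity)
    rw [h1, add_mul, one_mul, add_comm (a : ℝ) 1]
    refine add_le_add h3 ?_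
    rw [div_mul_eq_mul_div, one_mul, le_div_iff₀ hl]
    linarith
  obtain ⟨P, hP⟩ := exists_nat_ge ((2 : ℝ) ^ (1 / δ))
  refine ⟨K ^ P, one_le_pow₀ hK1, fun n hn => ?_⟩
  have hpow : (n : ℝ) ^ δ = ∏ p ∈ n.primeFactors, (p : ℝ) ^ (n.factorization p * δ) := by
    conv_lhs => rw [← Nat.prod_factorization_pow_eq_self hn.ne', Nat.prod_factorization_eq_prod_primeFactors]
    push_cast
    rw [← Real.finsetProd_rpow _ _ (fun i _ => by positivity)]
    refine Finset.prod_congr rfl fun p _ => ?_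
    rw [Real.rpow_mul (by positivity), Real.rpow_natCast]
  have hprod : ∏ p ∈ n.primeFactors, (if p < P then K else 1) ≤ K ^ P := by
    rw [Finset.prod_ite, Finset.prod_const, Finset.prod_const_one, mul_one]
    refine pow_le_pow_right₀ hK1 ?_
    calc _ ≤ (Finset.range P).card := Finset.card_le_card (fun p hp => by
          simp at hp ⊢; exact hp.2)
      _ = P := by simp
  rw [Nat.card_divisors hn.ne', hpow]
  push_cast
  calc ∏ p ∈ n.primeFactors, ((n.factorization p : ℝ) + 1)
      ≤ ∏ p ∈ n.primeFactors, ((if p < P then K else 1) * (p : ℝ) ^ (n.factorization p * δ)) := by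
        refine Finset.prod_le_prod (fun p _ => by positivity) fun p hp => ?_
        have hp2 : (2 : ℝ) ≤ p := by exact_mod_cast (Nat.prime_of_mem_primeFactors hp).two_le
        split_ifs with h
        · refine (hK _).trans ?_
          gcongr
        · have hPp : (2 : ℝ) ^ (1 / δ) ≤ p := hP.trans (by exact_mod_cast not_lt.1 h)
          have h2 : (2 : ℝ) ≤ (p : ℝ) ^ δ := by
            have := Real.rpow_le_rpow (by positivity) hPp hδ.le
            rwa [← Real.rpow_mul (by norm_num), one_div_mul_cancel hδ.ne', Real.rpow_one] at this
          rw [one_mul, mul_comm, Real.rpow_mul (by positivity), Real.rpow_natCast]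
          calc ((n.factorization p : ℝ) + 1) ≤ 2 ^ (n.factorization p) := by
                exact_mod_cast Nat.succ_le_of_lt (Nat.lt_two_pow_self)
            _ ≤ _ := by gcongr
    _ = (∏ p ∈ n.primeFactors, (if p < P then K else 1)) *
          ∏ p ∈ n.primeFactors, (p : ℝ) ^ (n.factorization p * δ) := Finset.prod_mul_distrib
    _ ≤ _ := by gcongr

lemma sq_add_sq_int_eq_zero {x y : ℤ} (h : x ^ 2 + y ^ 2 = 0) : x = 0 ∧ y = 0 := by
  constructor <;> nlinarith [sq_nonneg x, sq_nonneg y]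

/-- A circle centred at `m / 2` that carries three lattice points of the ball `B(0, N)` has
squared diameter `D ≤ 64 N ^ 6`: two chords `u`, `v` from a common point determine the centre
through a linear system whose determinant is a nonzero integer. -/
lemma circle_three_points {N : ℝ} {m1 m2 D a1 a2 b1 b2 c1 c2 : ℤ}
    (ha : (a1 : ℝ) ^ 2 + (a2 : ℝ) ^ 2 ≤ N ^ 2) (hb : (b1 : ℝ) ^ 2 + (b2 : ℝ) ^ 2 ≤ N ^ 2)
    (hc : (c1 : ℝ) ^ 2 + (c2 : ℝ) ^ 2 ≤ N ^ 2)
    (hDa : (2 * a1 - m1) ^ 2 + (2 * a2 - m2) ^ 2 = D)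
    (hDb : (2 * b1 - m1) ^ 2 + (2 * b2 - m2) ^ 2 = D)
    (hDc : (2 * c1 - m1) ^ 2 + (2 * c2 - m2) ^ 2 = D)
    (hab : (a1, a2) ≠ (b1, b2)) (hac : (a1, a2) ≠ (c1, c2)) (hbc : (b1, b2) ≠ (c1, c2)) :
    (D : ℝ) ≤ 64 * N ^ 6 := by
  obtain ⟨u1, rfl⟩ : ∃ u1, b1 = a1 + u1 := ⟨b1 - a1, by ring⟩
  obtain ⟨u2, rfl⟩ : ∃ u2, b2 = a2 + u2 := ⟨b2 - a2, by ring⟩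
  obtain ⟨v1, rfl⟩ : ∃ v1, c1 = a1 + v1 := ⟨c1 - a1, by ring⟩
  obtain ⟨v2, rfl⟩ : ∃ v2, c2 = a2 + v2 := ⟨c2 - a2, by ring⟩
  obtain ⟨w1, rfl⟩ : ∃ w1, m1 = 2 * a1 + w1 := ⟨m1 - 2 * a1, by ring⟩
  obtain ⟨w2, rfl⟩ : ∃ w2, m2 = 2 * a2 + w2 := ⟨m2 - 2 * a2, by ring⟩
  have hD : w1 ^ 2 + w2 ^ 2 = D := by linear_combination hDa
  have hu : u1 * w1 + u2 * w2 = u1 ^ 2 + u2 ^ 2 := by linarith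
  have hv : v1 * w1 + v2 * w2 = v1 ^ 2 + v2 ^ 2 := by linarith
  have hu0 : 0 < u1 ^ 2 + u2 ^ 2 := by
    refine (by positivity : 0 ≤ u1 ^ 2 + u2 ^ 2).lt_of_ne' fun h => hab ?_
    obtain ⟨h1, h2⟩ := sq_add_sq_int_eq_zero h
    simp [h1, h2]
  have hv0 : 0 < v1 ^ 2 + v2 ^ 2 := by
    refine (by positivity : 0 ≤ v1 ^ 2 + v2 ^ 2).lt_of_ne' fun h => hac ?_
    obtain ⟨h1, h2⟩ := sq_add_sq_int_eq_zero h
    simp [h1, h2]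
  have hdet : u1 * v2 - u2 * v1 ≠ 0 := by
    intro h
    have e1 : u1 * (v1 ^ 2 + v2 ^ 2) = v1 * (u1 ^ 2 + u2 ^ 2) := by
      linear_combination (-u1) * hv + v1 * hu + w2 * h
    have e2 : u2 * (v1 ^ 2 + v2 ^ 2) = v2 * (u1 ^ 2 + u2 ^ 2) := by
      linear_combination (-u2) * hv + v2 * hu - w1 * h
    have e3 : ((u1 ^ 2 + u2 ^ 2) * (v1 ^ 2 + v2 ^ 2)) * (v1 ^ 2 + v2 ^ 2) =
        ((u1 ^ 2 + u2 ^ 2) * (v1 ^ 2 + v2 ^ 2)) * (u1 ^ 2 + u2 ^ 2) := by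
      linear_combination (u1 * (v1 ^ 2 + v2 ^ 2) + v1 * (u1 ^ 2 + u2 ^ 2)) * e1 +
        (u2 * (v1 ^ 2 + v2 ^ 2) + v2 * (u1 ^ 2 + u2 ^ 2)) * e2
    have e4 := mul_left_cancel₀ (mul_pos hu0 hv0).ne' e3
    rw [e4] at e1 e2
    have f1 := mul_right_cancel₀ hu0.ne' e1
    have f2 := mul_right_cancel₀ hu0.ne' e2
    exact hbc (by simp [f1, f2])
  have hdet1 : 1 ≤ (u1 * v2 - u2 * v1) ^ 2 := by
    have : 0 < (u1 * v2 - u2 * v1) ^ 2 := by positivity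
    omega
  -- the integer form of `abc = 4RΔ` for the triangle with sides `u`, `v`, `u - v`
  have key : (u1 * v2 - u2 * v1) ^ 2 * (w1 ^ 2 + w2 ^ 2) =
      (u1 ^ 2 + u2 ^ 2) * (v1 ^ 2 + v2 ^ 2) * ((u1 - v1) ^ 2 + (u2 - v2) ^ 2) := by
    have e1 : (u1 * v2 - u2 * v1) * w1 = v2 * (u1 ^ 2 + u2 ^ 2) - u2 * (v1 ^ 2 + v2 ^ 2) := by
      linear_combination v2 * hu - u2 * hv
    have e2 : (u1 * v2 - u2 * v1) * w2 = u1 * (v1 ^ 2 + v2 ^ 2) - v1 * (u1 ^ 2 + u2 ^ 2) := by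
      linear_combination u1 * hv - v1 * hu
    calc _ = ((u1 * v2 - u2 * v1) * w1) ^ 2 + ((u1 * v2 - u2 * v1) * w2) ^ 2 := by ring
      _ = _ := by rw [e1, e2]; ring
  have hDle : D ≤ (u1 ^ 2 + u2 ^ 2) * (v1 ^ 2 + v2 ^ 2) * ((u1 - v1) ^ 2 + (u2 - v2) ^ 2) := by
    rw [← key, ← hD]
    exact le_mul_of_one_le_left (by positivity) hdet1
  have hDle' : (D : ℝ) ≤ ((u1 : ℝ) ^ 2 + (u2 : ℝ) ^ 2) * ((v1 : ℝ) ^ 2 + (v2 : ℝ) ^ 2) *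
      (((u1 : ℝ) - v1) ^ 2 + ((u2 : ℝ) - v2) ^ 2) := by exact_mod_cast hDle
  push_cast at hb hc
  have s1 : (u1 : ℝ) ^ 2 + (u2 : ℝ) ^ 2 ≤ 4 * N ^ 2 := by
    nlinarith [sq_nonneg (2 * a1 + u1 : ℝ), sq_nonneg (2 * a2 + u2 : ℝ)]
  have s2 : (v1 : ℝ) ^ 2 + (v2 : ℝ) ^ 2 ≤ 4 * N ^ 2 := by
    nlinarith [sq_nonneg (2 * a1 + v1 : ℝ), sq_nonneg (2 * a2 + v2 : ℝ)]
  have s3 : ((u1 : ℝ) - v1) ^ 2 + ((u2 : ℝ) - v2) ^ 2 ≤ 4 * N ^ 2 := by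
    nlinarith [sq_nonneg (2 * a1 + u1 + v1 : ℝ), sq_nonneg (2 * a2 + u2 + v2 : ℝ)]
  calc (D : ℝ) ≤ _ := hDle'
    _ ≤ (4 * N ^ 2) * (4 * N ^ 2) * (4 * N ^ 2) := by gcongr
    _ = 64 * N ^ 6 := by ring

lemma circle_count (δ : ℝ) (hδ : 0 < δ) :
    ∃ C : ℝ, 0 < C ∧ ∀ N : ℝ, 1 ≤ N → ∀ (m : ℤ × ℤ) (D : ℤ) (L : Finset (ℤ × ℤ)),
      (∀ l ∈ L, (l.1 : ℝ) ^ 2 + (l.2 : ℝ) ^ 2 ≤ N ^ 2 ∧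
        (2 * l.1 - m.1) ^ 2 + (2 * l.2 - m.2) ^ 2 = D) → (L.card : ℝ) ≤ C * N ^ δ := by
  obtain ⟨C₀, hC₀, hd⟩ := divisor_bound (δ / 6) (by positivity)
  set C₁ : ℝ := C₀ * (gaussNorm 1).card * 64 ^ (δ / 6) with hC₁
  have hC₁0 : 0 ≤ C₁ := by positivity
  refine ⟨2 + C₁, by positivity, fun N hN m D L hL => ?_⟩
  have hNδ : 1 ≤ N ^ δ := Real.one_le_rpow hN hδ.le
  rcases le_or_gt L.card 2 with h2 | h2
  · have : (L.card : ℝ) ≤ 2 := by exact_mod_cast h2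
    nlinarith
  obtain ⟨a, b, c, ha, hb, hc, hab, hac, hbc⟩ := Finset.two_lt_card_iff.1 h2
  have hD : (D : ℝ) ≤ 64 * N ^ 6 :=
    circle_three_points (hL a ha).1 (hL b hb).1 (hL c hc).1 (hL a ha).2 (hL b hb).2 (hL c hc).2
      hab hac hbc
  have hD0 : 0 ≤ D := by rw [← (hL a ha).2]; positivity
  obtain ⟨n, rfl⟩ := Int.eq_ofNat_of_zero_le hD0
  have hn : 0 < n := by
    rcases Nat.eq_zero_or_pos n with rfl | h
    · exfalso
      have h1 := (hL a ha).2
      have h2 := (hL b hb).2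
      obtain ⟨h3, h4⟩ := sq_add_sq_int_eq_zero h1
      obtain ⟨h5, h6⟩ := sq_add_sq_int_eq_zero h2
      apply hab
      ext <;> omega
    · exact h
  have hcard : L.card ≤ (gaussNorm n).card := by
    refine Finset.card_le_card_of_injOn
      (fun l => (⟨2 * l.1 - m.1, 2 * l.2 - m.2⟩ : GaussianInt)) ?_ ?_
    · intro l hl
      have := (hL l hl).2
      rw [Finset.mem_coe, mem_gaussNorm, Zsqrtd.norm_def]
      simp only
      linarith
    · intro l _ l' _ h
      simp only [Zsqrtd.ext_iff] at h
      ext <;> omega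
  have hnr : (n : ℝ) ≤ 64 * N ^ 6 := by exact_mod_cast hD
  calc (L.card : ℝ) ≤ (n.divisors.card : ℝ) * (gaussNorm 1).card := by
        exact_mod_cast hcard.trans (card_gaussNorm_le n hn)
    _ ≤ (C₀ * (n : ℝ) ^ (δ / 6)) * (gaussNorm 1).card := by gcongr; exact hd n hn
    _ ≤ (C₀ * (64 * N ^ 6) ^ (δ / 6)) * (gaussNorm 1).card := by gcongr
    _ = C₁ * N ^ δ := by
        rw [Real.mul_rpow (by norm_num) (by positivity), ← Real.rpow_natCast N 6,
          ← Real.rpow_mul (by positivity), hC₁]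
        rw [show ((6 : ℕ) : ℝ) * (δ / 6) = δ by push_cast; ring]
        ring
    _ ≤ (2 + C₁) * N ^ δ := by gcongr; linarith

/-! ### Parseval, the time change and Bessel's inequality -/

/-- The unimodular exponential `e^{iθ}`. -/
def ex (θ : ℝ) : ℂ := Complex.exp (Complex.I * (θ : ℂ))

lemma ex_add (a b : ℝ) : ex (a + b) = ex a * ex b := by
  simp [ex, mul_add, Complex.exp_add]

lemma norm_ex (a : ℝ) : ‖ex a‖ = 1 := by
  rw [ex, mul_comm]; exact Complex.norm_exp_ofReal_mul_I a

lemma conj_ex (a : ℝ) : (starRingEnd ℂ) (ex a) = ex (-a) := by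
  simp [ex, ← Complex.exp_conj]

@[fun_prop]
lemma continuous_ex : Continuous ex := by unfold ex; fun_prop

lemma ex_int_periodic (n : ℤ) (x : ℝ) : ex (n * (x + 2 * π)) = ex (n * x) := by
  rw [mul_add, ex_add]
  have : ex ((n : ℝ) * (2 * π)) = 1 := by
    rw [ex, Complex.exp_eq_one_iff]
    exact ⟨n, by push_cast; ring⟩
  rw [this, mul_one]

lemma integral_ex (n : ℤ) :
    ∫ x in (0 : ℝ)..(2 * π), ex (n * x) = if n = 0 then ((2 * π : ℝ) : ℂ) else 0 := by
  split_ifs with h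
  · subst h; simp [ex]
  · have hc : (Complex.I * (n : ℂ)) ≠ 0 := by
      simp [h]
    have h1 : ∀ x : ℝ, ex (n * x) = Complex.exp ((Complex.I * (n : ℂ)) * (x : ℂ)) := by
      intro x; simp [ex, mul_assoc]
    simp_rw [h1]
    rw [integral_exp_mul_complex hc]
    have h2 := ex_int_periodic n 0
    rw [h1, h1] at h2
    simp only [zero_add] at h2
    rw [h2, sub_self, zero_div]

lemma parseval_int (S : Finset ℤ) (c : ℤ → ℂ) :
    ∫ x in (0 : ℝ)..(2 * π), ‖∑ n ∈ S, c n * ex (n * x)‖ ^ 2 = 2 * π * ∑ n ∈ S, ‖c n‖ ^ 2 := by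
  apply Complex.ofReal_injective
  rw [← intervalIntegral.integral_ofReal]
  have h1 : ∀ x : ℝ, ((‖∑ n ∈ S, c n * ex (n * x)‖ ^ 2 : ℝ) : ℂ) =
      ∑ n ∈ S, ∑ k ∈ S, c n * (starRingEnd ℂ) (c k) * ex ((n - k : ℤ) * x) := by
    intro x
    rw [Complex.ofReal_pow, ← Complex.mul_conj', map_sum, Finset.sum_mul_sum]
    refine Finset.sum_congr rfl fun n _ => Finset.sum_congr rfl fun k _ => ?_
    rw [map_mul, conj_ex, show ((n - k : ℤ) : ℝ) * x = n * x + -(k * x) by push_cast; ring, ex_add]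
    ring
  simp_rw [h1]
  have hint : ∀ n k : ℤ, IntervalIntegrable
      (fun x : ℝ => c n * (starRingEnd ℂ) (c k) * ex ((n - k : ℤ) * x)) volume 0 (2 * π) :=
    fun n k => Continuous.intervalIntegrable (by fun_prop) _ _
  rw [intervalIntegral.integral_finsetSum
    (fun n _ => Continuous.intervalIntegrable (by fun_prop) _ _)]
  rw [Complex.ofReal_mul, Complex.ofReal_sum, Finset.mul_sum]
  refine Finset.sum_congr rfl fun n hn => ?_
  rw [intervalIntegral.integral_finsetSum (fun k _ => hint n k)]
  simp_rw [intervalIntegral.integral_const_mul, integral_ex, sub_eq_zero]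
  rw [Finset.sum_eq_single n]
  · simp [Complex.mul_conj']; ring
  · intro k _ hk; simp [hk.symm]
  · intro h; exact absurd hn h

lemma sum_ex_fiber {ι : Type*} (J : Finset ι) (c : ι → ℂ) (p : ι → ℤ) (x : ℝ) :
    ∑ j ∈ J, c j * ex (p j * x) =
      ∑ n ∈ J.image p, (∑ j ∈ J with p j = n, c j) * ex (n * x) := by
  rw [← Finset.sum_fiberwise_of_maps_to (t := J.image p) (g := p)
    (fun j hj => Finset.mem_image_of_mem p hj)]
  refine Finset.sum_congr rfl fun n _ => ?_
  rw [Finset.sum_mul]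
  refine Finset.sum_congr rfl fun j hj => ?_
  rw [(Finset.mem_filter.1 hj).2]

/-- Parseval's identity for a trigonometric polynomial whose frequencies `p j` may repeat. -/
lemma parseval_fiber {ι : Type*} (J : Finset ι) (c : ι → ℂ) (p : ι → ℤ) :
    ∫ x in (0 : ℝ)..(2 * π), ‖∑ j ∈ J, c j * ex (p j * x)‖ ^ 2 =
      2 * π * ∑ n ∈ J.image p, ‖∑ j ∈ J with p j = n, c j‖ ^ 2 := by
  simp_rw [sum_ex_fiber J c p]
  exact parseval_int _ (fun n => ∑ j ∈ J with p j = n, c j)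

lemma lintegral_parseval_fiber {ι : Type*} (J : Finset ι) (c : ι → ℂ) (p : ι → ℤ) :
    ∫⁻ x in Ioc (0 : ℝ) (2 * π), ENNReal.ofReal (‖∑ j ∈ J, c j * ex (p j * x)‖ ^ 2) =
      ∑ n ∈ J.image p, ENNReal.ofReal (2 * π) *
        ENNReal.ofReal (‖∑ j ∈ J with p j = n, c j‖ ^ 2) := by
  have hpi : (0 : ℝ) ≤ 2 * π := by positivity
  have hcont : Continuous (fun x : ℝ => ‖∑ j ∈ J, c j * ex (p j * x)‖ ^ 2) := by fun_prop
  rw [← ofReal_integral_eq_lintegral_ofReal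
    ((intervalIntegrable_iff_integrableOn_Ioc_of_le hpi).1 (hcont.intervalIntegrable _ _))
    (ae_of_all _ fun x => by positivity), ← intervalIntegral.integral_of_le hpi,
    parseval_fiber, ENNReal.ofReal_mul hpi, ← Finset.mul_sum,
    ENNReal.ofReal_sum_of_nonneg (fun _ _ => by positivity)]

/-- Cauchy–Schwarz on each fibre of `q`. -/
lemma fiber_cauchy_schwarz {ι : Type*} (J : Finset ι) (c : ι → ℂ) (q : ι → ℤ) (K : ℝ)
    (hK : ∀ n, (((J.filter (fun j => q j = n)).card : ℕ) : ℝ) ≤ K) :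
    ∑ n ∈ J.image q, ‖∑ j ∈ J with q j = n, c j‖ ^ 2 ≤ K * ∑ j ∈ J, ‖c j‖ ^ 2 := by
  rw [← Finset.sum_fiberwise_of_maps_to (t := J.image q) (g := q)
    (fun j hj => Finset.mem_image_of_mem q hj) (fun j => ‖c j‖ ^ 2), Finset.mul_sum]
  refine Finset.sum_le_sum fun n _ => ?_
  calc ‖∑ j ∈ J with q j = n, c j‖ ^ 2 ≤ (∑ j ∈ J with q j = n, ‖c j‖) ^ 2 := by
        gcongr; exact norm_sum_le _ _
    _ ≤ _ := sq_sum_le_card_mul_sum_sq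
    _ ≤ _ := by gcongr; exact hK n

/-- The change of variables `s = g(t)` bounds the weighted time integral of a `2π`-periodic
function by a number of periods depending only on `g` and `r`. -/
lemma time_integral (g : ℝ → ℝ) (hg : ContDiff ℝ (⊤ : ℕ∞) g) (hm : Monotone g) (r : ℝ)
    (hr : 0 < r) : ∃ M : ℝ, 0 < M ∧ ∀ h : ℝ → ℝ, Continuous h → (∀ s, 0 ≤ h s) →
      (∀ s, h (s + 2 * π) = h s) →
      ∫⁻ t in Icc (-r) r, ENNReal.ofReal (deriv g t * h (g t)) ≤
        ENNReal.ofReal (M * ∫ s in (0 : ℝ)..(2 * π), h s) := by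
  obtain ⟨n, hn⟩ := exists_nat_ge (max |g (-r)| |g r|)
  refine ⟨2 * n + 1, by positivity, fun h hc h0 hp => ?_⟩
  have hdc : Continuous (deriv g) := hg.continuous_deriv (by simp)
  have hd0 : ∀ t, 0 ≤ deriv g t := fun t => hm.deriv_nonneg
  have hd : ∀ t, HasDerivAt g (deriv g t) t := fun t =>
    (hg.differentiable (by simp) t).hasDerivAt
  have hgc : Continuous g := hg.continuous
  have hcont : Continuous (fun t => deriv g t * h (g t)) := hdc.mul (hc.comp hgc)
  have hrr : -r ≤ r := by linarith
  rw [← restrict_Ioc_eq_restrict_Icc, ← ofReal_integral_eq_lintegral_ofReal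
    ((intervalIntegrable_iff_integrableOn_Ioc_of_le hrr).1 (hcont.intervalIntegrable _ _))
    (ae_of_all _ fun t => mul_nonneg (hd0 t) (h0 _)), ← intervalIntegral.integral_of_le hrr]
  apply ENNReal.ofReal_le_ofReal
  have hsub : ∫ t in (-r)..r, deriv g t * h (g t) = ∫ s in (g (-r))..(g r), h s := by
    rw [← intervalIntegral.integral_comp_mul_deriv (f := g) (f' := deriv g)
      (fun t _ => hd t) hdc.continuousOn hc]
    simp only [Function.comp, mul_comm]
  have hper : Function.Periodic h (2 * π) := hp
  have hpi := Real.pi_gt_three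
  have hn' := hn
  simp only [max_le_iff, abs_le] at hn'
  have hnn : (0 : ℝ) ≤ n := Nat.cast_nonneg n
  have hI : ∫ s in (-(n * (2 * π)))..(-(n * (2 * π)) + (2 * n : ℤ) • (2 * π)), h s =
      (2 * n : ℤ) • ∫ s in (-(n * (2 * π)))..(-(n * (2 * π)) + 2 * π), h s :=
    hper.intervalIntegral_add_zsmul_eq (2 * n : ℤ) _
      (fun _ _ => hc.intervalIntegrable _ _)
  have hI2 : ∫ s in (-(n * (2 * π)))..(-(n * (2 * π)) + 2 * π), h s = ∫ s in (0 : ℝ)..(2 * π), h s := by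
    have := hper.intervalIntegral_add_eq (-(n * (2 * π))) 0
    simpa using this
  have hnonneg : 0 ≤ ∫ s in (0 : ℝ)..(2 * π), h s :=
    intervalIntegral.integral_nonneg (by positivity) fun s _ => h0 s
  rw [hsub]
  have hle : ∫ s in (g (-r))..(g r), h s ≤
      ∫ s in (-(n * (2 * π)))..(-(n * (2 * π)) + (2 * n : ℤ) • (2 * π)), h s := by
    refine intervalIntegral.integral_mono_interval ?_ (hm hrr) ?_ (ae_of_all _ h0)
      (hc.intervalIntegrable _ _)
    · nlinarith
    · simp only [zsmul_eq_mul]; push_cast; nlinarith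
  refine hle.trans ?_
  rw [hI, hI2, zsmul_eq_mul]
  push_cast
  nlinarith

lemma coeff_eq_zero (f : ℝ → ℂ)
    (hf : ¬ AEStronglyMeasurable f ((volume : Measure ℝ).restrict (Ioc (0 : ℝ) (2 * π)))) (n : ℤ) :
    ∫ x in (0 : ℝ)..(2 * π), ex (-(n * x)) * f x = 0 := by
  rw [intervalIntegral.integral_of_le (by positivity)]
  refine integral_undef fun hi => hf ?_
  have h1 : AEStronglyMeasurable (fun x => ex (n * x) * (ex (-(n * x)) * f x))
      ((volume : Measure ℝ).restrict (Ioc (0 : ℝ) (2 * π))) :=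
    (Continuous.aestronglyMeasurable (by fun_prop)).mul hi.aestronglyMeasurable
  refine h1.congr (ae_of_all _ fun x => ?_)
  simp only
  rw [← mul_assoc, ← ex_add]; simp [ex]

/-- Bessel's inequality in the form valid without any measurability assumption: for
non-measurable `f` the Bochner integrals vanish. -/
lemma bessel_one (f : ℝ → ℂ) (S : Finset ℤ) :
    ∑ n ∈ S, ENNReal.ofReal (‖∫ x in (0 : ℝ)..(2 * π), ex (-(n * x)) * f x‖ ^ 2) ≤
      ENNReal.ofReal (2 * π) * ∫⁻ x in Ioc (0 : ℝ) (2 * π), ENNReal.ofReal (‖f x‖ ^ 2) := by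
  have hpi : (0 : ℝ) < 2 * π := by positivity
  set μ := (volume : Measure ℝ).restrict (Ioc (0 : ℝ) (2 * π)) with hμ
  by_cases hf : AEStronglyMeasurable f μ
  swap
  · have hzero := coeff_eq_zero f hf
    simp [hzero]
  by_cases hfin : ∫⁻ x in Ioc (0 : ℝ) (2 * π), ENNReal.ofReal (‖f x‖ ^ 2) = ⊤
  · rw [hfin, ENNReal.mul_top (by simpa using Real.pi_pos)]; exact le_top
  have hsq : Integrable (fun x => ‖f x‖ ^ 2) μ :=
    (lintegral_ofReal_ne_top_iff_integrable (hf.norm.pow 2)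
      (ae_of_all _ fun x => sq_nonneg ‖f x‖)).1 hfin
  have hL2 : MemLp f 2 μ := (memLp_two_iff_integrable_sq_norm hf).2 hsq
  have hint : Integrable f μ := hL2.integrable (by norm_num)
  set c : ℤ → ℂ := fun n => ∫ x in (0 : ℝ)..(2 * π), ex (-(n * x)) * f x with hc
  set T : ℝ → ℂ := fun x => ∑ n ∈ S, c n * ex (n * x) with hT
  have hTc : Continuous T := by rw [hT]; fun_prop
  have hTint : Integrable (fun x => ‖T x‖ ^ 2) μ :=
    (intervalIntegrable_iff_integrableOn_Ioc_of_le hpi.le).1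
      ((by fun_prop : Continuous fun x => ‖T x‖ ^ 2).intervalIntegrable _ _)
  have hTpar : ∫ x, ‖T x‖ ^ 2 ∂μ = 2 * π * ∑ n ∈ S, ‖c n‖ ^ 2 := by
    rw [hμ, ← intervalIntegral.integral_of_le hpi.le]; exact parseval_int S c
  have hexf : ∀ n : ℤ, Integrable (fun x => ex (-(n * x)) * f x) μ := fun n =>
    hint.bdd_mul (c := 1) (Continuous.aestronglyMeasurable (by fun_prop))
      (ae_of_all _ fun x => (norm_ex _).le)
  have hpair : ∫ x, (starRingEnd ℂ) (T x) * f x ∂μ = ((∑ n ∈ S, ‖c n‖ ^ 2 : ℝ) : ℂ) := by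
    have h1 : ∀ x, (starRingEnd ℂ) (T x) * f x =
        ∑ n ∈ S, (starRingEnd ℂ) (c n) * (ex (-(n * x)) * f x) := by
      intro x
      simp only [hT, map_sum, map_mul, conj_ex, Finset.sum_mul, mul_assoc]
    simp_rw [h1]
    rw [integral_finsetSum _ (fun n _ => (hexf n).const_mul _)]
    push_cast
    refine Finset.sum_congr rfl fun n _ => ?_
    rw [integral_const_mul, hμ, ← intervalIntegral.integral_of_le hpi.le, ← Complex.conj_mul']
  -- `|T f| ≤ (|T|² / (2π) + 2π |f|²) / 2`, integrated against Parseval for `T`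
  have hbound : ∑ n ∈ S, ‖c n‖ ^ 2 ≤
      ∫ x, ((2 * π)⁻¹ / 2 * ‖T x‖ ^ 2 + (2 * π) / 2 * ‖f x‖ ^ 2) ∂μ := by
    have h2 : ∑ n ∈ S, ‖c n‖ ^ 2 = ‖∫ x, (starRingEnd ℂ) (T x) * f x ∂μ‖ := by
      rw [hpair, Complex.norm_real, Real.norm_of_nonneg (by positivity)]
    rw [h2]
    refine norm_integral_le_of_norm_le ((hTint.const_mul _).add (hsq.const_mul _))
      (ae_of_all _ fun x => ?_)
    rw [norm_mul, RCLike.norm_conj]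
    have h3 : 0 ≤ (2 * π)⁻¹ / 2 * (‖T x‖ - 2 * π * ‖f x‖) ^ 2 := by positivity
    have h4 : (2 * π)⁻¹ / 2 * (‖T x‖ - 2 * π * ‖f x‖) ^ 2 =
        (2 * π)⁻¹ / 2 * ‖T x‖ ^ 2 + (2 * π) / 2 * ‖f x‖ ^ 2 - ‖T x‖ * ‖f x‖ := by
      field_simp; ring
    linarith
  rw [integral_add (hTint.const_mul _) (hsq.const_mul _), integral_const_mul, integral_const_mul,
    hTpar] at hbound
  have hfinal : ∑ n ∈ S, ‖c n‖ ^ 2 ≤ 2 * π * ∫ x, ‖f x‖ ^ 2 ∂μ := by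
    have : (2 * π)⁻¹ / 2 * (2 * π * ∑ n ∈ S, ‖c n‖ ^ 2) = (∑ n ∈ S, ‖c n‖ ^ 2) / 2 := by
      field_simp
    rw [this] at hbound
    linarith
  rw [← ENNReal.ofReal_sum_of_nonneg (fun _ _ => by positivity),
    ← ofReal_integral_eq_lintegral_ofReal hsq (ae_of_all _ fun x => by positivity),
    ← ENNReal.ofReal_mul hpi.le]
  exact ENNReal.ofReal_le_ofReal hfinal

/-- Bessel's inequality on `𝕋²`, obtained by iterating the one-dimensional one; no joint
measurability of `φ` is required. -/
lemma bessel_two (φ : ℝ → ℝ → ℂ) (A : Finset (ℤ × ℤ)) :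
    ∑ k ∈ A, ENNReal.ofReal (‖fCoeff2 φ k‖ ^ 2) ≤
      ENNReal.ofReal (2 * π) * (ENNReal.ofReal (2 * π) *
        ∫⁻ x1 in Ioc (0 : ℝ) (2 * π), ∫⁻ x2 in Ioc (0 : ℝ) (2 * π),
          ENNReal.ofReal (‖φ x1 x2‖ ^ 2)) := by
  classical
  set c : ℤ → ℝ → ℂ := fun n x1 => ∫ x2 in (0 : ℝ)..(2 * π), ex (-(n * x2)) * φ x1 x2 with hc
  have hcoef : ∀ k : ℤ × ℤ, fCoeff2 φ k = ∫ x1 in (0 : ℝ)..(2 * π), ex (-(k.1 * x1)) * c k.2 x1 := by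
    intro k
    unfold fCoeff2
    congr 1
    ext x1
    rw [hc]
    simp only
    rw [← intervalIntegral.integral_const_mul]
    congr 1
    ext x2
    rw [← mul_assoc, ← ex_add, ex]
    congr 2
    push_cast; ring
  set μ := (volume : Measure ℝ).restrict (Ioc (0 : ℝ) (2 * π)) with hμ
  set S₁ := A.image Prod.fst
  set S₂ := A.image Prod.snd
  have hsub : A ⊆ S₁ ×ˢ S₂ := fun k hk => Finset.mem_product.2
    ⟨Finset.mem_image_of_mem _ hk, Finset.mem_image_of_mem _ hk⟩
  set S₃ := S₂.filter (fun n => AEStronglyMeasurable (c n) μ) with hS₃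
  calc ∑ k ∈ A, ENNReal.ofReal (‖fCoeff2 φ k‖ ^ 2)
      ≤ ∑ k ∈ S₁ ×ˢ S₂, ENNReal.ofReal (‖fCoeff2 φ k‖ ^ 2) :=
        Finset.sum_le_sum_of_subset hsub
    _ = ∑ n ∈ S₂, ∑ m ∈ S₁, ENNReal.ofReal (‖fCoeff2 φ (m, n)‖ ^ 2) :=
        Finset.sum_product_right _ _ _
    _ = ∑ n ∈ S₃, ∑ m ∈ S₁, ENNReal.ofReal (‖fCoeff2 φ (m, n)‖ ^ 2) := by
        symm
        refine Finset.sum_subset (Finset.filter_subset _ _) fun n hn hn' => ?_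
        have hnm : ¬ AEStronglyMeasurable (c n) μ := fun h =>
          hn' (Finset.mem_filter.2 ⟨hn, h⟩)
        refine Finset.sum_eq_zero fun m _ => ?_
        rw [hcoef, coeff_eq_zero (c n) hnm m]
        simp
    _ ≤ ∑ n ∈ S₃, ENNReal.ofReal (2 * π) * ∫⁻ x1, ENNReal.ofReal (‖c n x1‖ ^ 2) ∂μ := by
        refine Finset.sum_le_sum fun n _ => ?_
        simp_rw [hcoef]
        exact bessel_one (c n) S₁
    _ = ENNReal.ofReal (2 * π) * ∫⁻ x1, ∑ n ∈ S₃, ENNReal.ofReal (‖c n x1‖ ^ 2) ∂μ := by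
        rw [lintegral_finsetSum' _ (fun n hn => ?_), Finset.mul_sum]
        exact ((Finset.mem_filter.1 hn).2.norm.pow 2).aemeasurable.ennreal_ofReal
    _ ≤ ENNReal.ofReal (2 * π) * ∫⁻ x1, (ENNReal.ofReal (2 * π) *
          ∫⁻ x2 in Ioc (0 : ℝ) (2 * π), ENNReal.ofReal (‖φ x1 x2‖ ^ 2)) ∂μ := by
        gcongr with x1
        exact bessel_one (φ x1) S₃
    _ = _ := by rw [lintegral_const_mul' _ _ ENNReal.ofReal_ne_top]

/-! ### The bilinear estimate -/

/-- Space-time `L²` bound for an exponential sum with frequencies `(p₁ j, p₂ j)` in space and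
`q j` in the time variable `g(t)`, when at most `K` indices share all three frequencies. -/
lemma spacetime_bound (g : ℝ → ℝ) (hg : ContDiff ℝ (⊤ : ℕ∞) g) (hm : Monotone g) (r : ℝ)
    (hr : 0 < r) : ∃ M : ℝ, 0 < M ∧ ∀ (ι : Type) (J : Finset ι) (c : ι → ℂ) (p₁ p₂ q : ι → ℤ)
      (K : ℝ), (∀ n₁ n₂ n : ℤ,
        ((((J.filter (fun j => p₂ j = n₂)).filter (fun j => p₁ j = n₁)).filter
          (fun j => q j = n)).card : ℝ) ≤ K) →
      ∫⁻ t in Icc (-r) r, ∫⁻ x1 in Ioc (0 : ℝ) (2 * π), ∫⁻ x2 in Ioc (0 : ℝ) (2 * π),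
        ENNReal.ofReal (‖((deriv g t ^ ((1 : ℝ) / 2) : ℝ) : ℂ) *
          ∑ j ∈ J, c j * ex (q j * g t) * ex (p₁ j * x1) * ex (p₂ j * x2)‖ ^ 2) ≤
        ENNReal.ofReal (M * K * ∑ j ∈ J, ‖c j‖ ^ 2) := by
  classical
  obtain ⟨M, hM, hT⟩ := time_integral g hg hm r hr
  refine ⟨2 * π * (2 * π) * M * (2 * π), by positivity, fun ι J c p₁ p₂ q K hK => ?_⟩
  have hpi : (0 : ℝ) ≤ 2 * π := by positivity
  have hdc : Continuous (deriv g) := hg.continuous_deriv (by simp)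
  have hgc : Continuous g := hg.continuous
  have hd0 : ∀ t, 0 ≤ deriv g t := fun t => hm.deriv_nonneg
  have hspace : ∀ t, ∫⁻ x1 in Ioc (0 : ℝ) (2 * π), ∫⁻ x2 in Ioc (0 : ℝ) (2 * π),
        ENNReal.ofReal (‖((deriv g t ^ ((1 : ℝ) / 2) : ℝ) : ℂ) *
          ∑ j ∈ J, c j * ex (q j * g t) * ex (p₁ j * x1) * ex (p₂ j * x2)‖ ^ 2) =
      ∑ n₂ ∈ J.image p₂, ∑ n₁ ∈ (J.filter (fun j => p₂ j = n₂)).image p₁,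
        ENNReal.ofReal (2 * π * (2 * π)) * ENNReal.ofReal (deriv g t *
          ‖∑ j ∈ (J.filter (fun j => p₂ j = n₂)).filter (fun j => p₁ j = n₁),
            c j * ex (q j * g t)‖ ^ 2) := by
    intro t
    set w : ℂ := ((deriv g t ^ ((1 : ℝ) / 2) : ℝ) : ℂ) with hw
    have hw2 : ‖w‖ ^ 2 = deriv g t := by
      rw [hw, Complex.norm_real, Real.norm_of_nonneg (Real.rpow_nonneg (hd0 t) _),
        ← Real.sqrt_eq_rpow, Real.sq_sqrt (hd0 t)]
    have h1 : ∀ x1 x2 : ℝ, w * ∑ j ∈ J, c j * ex (q j * g t) * ex (p₁ j * x1) * ex (p₂ j * x2) =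
        ∑ j ∈ J, (w * (c j * ex (q j * g t)) * ex (p₁ j * x1)) * ex (p₂ j * x2) := by
      intro x1 x2
      rw [Finset.mul_sum]
      exact Finset.sum_congr rfl fun j _ => by ring
    simp_rw [h1, lintegral_parseval_fiber]
    rw [lintegral_finsetSum' _ (fun n _ => (Continuous.measurable (by fun_prop)).ennreal_ofReal.const_mul _
      |>.aemeasurable)]
    refine Finset.sum_congr rfl fun n₂ _ => ?_
    rw [lintegral_const_mul' _ _ ENNReal.ofReal_ne_top, lintegral_parseval_fiber, Finset.mul_sum]
    refine Finset.sum_congr rfl fun n₁ _ => ?_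
    rw [← Finset.mul_sum, norm_mul, mul_pow, hw2, ← mul_assoc, ENNReal.ofReal_mul hpi]
  simp_rw [hspace]
  have hmeas : ∀ I : Finset ι, AEMeasurable (fun t => ENNReal.ofReal (2 * π * (2 * π)) *
      ENNReal.ofReal (deriv g t * ‖∑ j ∈ I, c j * ex (q j * g t)‖ ^ 2))
      ((volume : Measure ℝ).restrict (Icc (-r) r)) := by
    intro I
    refine Measurable.aemeasurable (Measurable.const_mul ?_ _)
    exact (Continuous.measurable (by fun_prop)).ennreal_ofReal
  have htime : ∀ I : Finset ι, (∀ n : ℤ, ((I.filter (fun j => q j = n)).card : ℝ) ≤ K) →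
      ∫⁻ t in Icc (-r) r, ENNReal.ofReal (2 * π * (2 * π)) *
        ENNReal.ofReal (deriv g t * ‖∑ j ∈ I, c j * ex (q j * g t)‖ ^ 2) ≤
      ENNReal.ofReal (2 * π * (2 * π) * M * (2 * π) * K * ∑ j ∈ I, ‖c j‖ ^ 2) := by
    intro I hI
    rw [lintegral_const_mul' _ _ ENNReal.ofReal_ne_top]
    have h2 := hT (fun s => ‖∑ j ∈ I, c j * ex (q j * s)‖ ^ 2) (by fun_prop)
      (fun s => by positivity) (fun s => by simp_rw [ex_int_periodic])
    rw [parseval_fiber] at h2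
    refine (mul_le_mul_right h2 _).trans ?_
    rw [← ENNReal.ofReal_mul (by positivity)]
    apply ENNReal.ofReal_le_ofReal
    have h3 := fiber_cauchy_schwarz I c q K hI
    calc _ = (2 * π * (2 * π) * M * (2 * π)) * ∑ n ∈ I.image q, ‖∑ j ∈ I with q j = n, c j‖ ^ 2 := by
          ring
      _ ≤ (2 * π * (2 * π) * M * (2 * π)) * (K * ∑ j ∈ I, ‖c j‖ ^ 2) := by gcongr
      _ = _ := by ring
  have hK0 : 0 ≤ K := le_trans (Nat.cast_nonneg _) (hK 0 0 0)
  rw [lintegral_finsetSum' _ (fun n₂ _ => Finset.aemeasurable_fun_sum _ fun n₁ _ => hmeas _)]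
  calc _ ≤ ∑ n₂ ∈ J.image p₂, ∑ n₁ ∈ (J.filter (fun j => p₂ j = n₂)).image p₁,
        ENNReal.ofReal (2 * π * (2 * π) * M * (2 * π) * K *
          ∑ j ∈ (J.filter (fun j => p₂ j = n₂)).filter (fun j => p₁ j = n₁), ‖c j‖ ^ 2) := by
        refine Finset.sum_le_sum fun n₂ _ => ?_
        rw [lintegral_finsetSum' _ (fun n₁ _ => hmeas _)]
        exact Finset.sum_le_sum fun n₁ _ => htime _ (hK n₁ n₂)
    _ = ENNReal.ofReal (∑ n₂ ∈ J.image p₂, ∑ n₁ ∈ (J.filter (fun j => p₂ j = n₂)).image p₁,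
        2 * π * (2 * π) * M * (2 * π) * K *
          ∑ j ∈ (J.filter (fun j => p₂ j = n₂)).filter (fun j => p₁ j = n₁), ‖c j‖ ^ 2) := by
        rw [ENNReal.ofReal_sum_of_nonneg (fun _ _ => Finset.sum_nonneg fun _ _ => by positivity)]
        refine Finset.sum_congr rfl fun n₂ _ => ?_
        rw [ENNReal.ofReal_sum_of_nonneg (fun _ _ => by positivity)]
    _ = _ := by
        simp_rw [← Finset.mul_sum]
        congr 2
        rw [← Finset.sum_fiberwise_of_maps_to (t := J.image p₂) (g := p₂)
          (fun j hj => Finset.mem_image_of_mem p₂ hj) (fun j => ‖c j‖ ^ 2)]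
        refine Finset.sum_congr rfl fun n₂ _ => ?_
        exact Finset.sum_fiberwise_of_maps_to (fun j hj => Finset.mem_image_of_mem p₁ hj) _

lemma zBall_finite (N : ℝ) : {k : ℤ × ℤ | zAbs2 k ≤ N}.Finite := by
  obtain ⟨n, hn⟩ := exists_nat_ge N
  refine ((Set.finite_Icc (-(n : ℤ)) n).prod (Set.finite_Icc (-(n : ℤ)) n)).subset ?_
  rintro ⟨a, b⟩ hk
  have hk' : zAbs2 (a, b) ≤ n := le_trans hk hn
  have h1 : |(a : ℝ)| ≤ n := (Real.abs_le_sqrt (by simp; positivity)).trans hk'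
  have h2 : |(b : ℝ)| ≤ n := (Real.abs_le_sqrt (by simp; positivity)).trans hk'
  simp only [Set.mem_prod, Set.mem_Icc]
  constructor
  · exact abs_le.1 (by exact_mod_cast h1)
  · exact abs_le.1 (by exact_mod_cast h2)

/-- The lattice ball `B(0, N)` as a finite set. -/
def zBall (N : ℝ) : Finset (ℤ × ℤ) := (zBall_finite N).toFinset

lemma mem_zBall {N : ℝ} {k : ℤ × ℤ} : k ∈ zBall N ↔ zAbs2 k ≤ N := by simp [zBall]

lemma Sop2_eq_sum (g : ℝ → ℝ) (φ : ℝ → ℝ → ℂ) (N : ℝ)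
    (hφ : ∀ k : ℤ × ℤ, N < zAbs2 k → fCoeff2 φ k = 0) (t x1 x2 : ℝ) :
    Sop2 g φ t x1 x2 = ∑ k ∈ zBall N, fCoeff2 φ k * ex (-(g t * ((k.1 : ℝ) ^ 2 + (k.2 : ℝ) ^ 2))) *
      ex (k.1 * x1) * ex (k.2 * x2) := by
  unfold Sop2
  rw [tsum_eq_sum (s := zBall N)]
  · refine Finset.sum_congr rfl fun k _ => ?_
    rw [mul_assoc (_ * _), ← ex_add, ex, ex]
    rw [show Complex.I * ((-(g t * ((k.1 : ℝ) ^ 2 + (k.2 : ℝ) ^ 2)) : ℝ) : ℂ) =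
      -Complex.I * ((g t * ((k.1 : ℝ) ^ 2 + (k.2 : ℝ) ^ 2) : ℝ) : ℂ) by push_cast; ring]
    ring
  · intro k hk
    rw [hφ k (not_le.1 fun h => hk (mem_zBall.2 h)), mul_zero]

/-- A pair `(k, l) ∈ B(0,N₁) × B(0,N₂)` with prescribed `k + l` and `|k|² + |l|²` is determined by
`l`, which lies on a fixed circle. -/
lemma resonance_count (δ : ℝ) (hδ : 0 < δ) : ∃ C : ℝ, 0 < C ∧ ∀ N₁ N₂ : ℝ, 1 ≤ N₂ →
    ∀ n₁ n₂ n : ℤ,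
      (((((zBall N₁ ×ˢ zBall N₂).filter (fun j => j.1.2 + j.2.2 = n₂)).filter
        (fun j => j.1.1 + j.2.1 = n₁)).filter
          (fun j => -(j.1.1 ^ 2 + j.1.2 ^ 2 + j.2.1 ^ 2 + j.2.2 ^ 2) = n)).card : ℝ) ≤
        C * N₂ ^ δ := by
  classical
  obtain ⟨C, hC, h⟩ := circle_count δ hδ
  refine ⟨C, hC, fun N₁ N₂ hN n₁ n₂ n => ?_⟩
  set J := ((((zBall N₁ ×ˢ zBall N₂).filter (fun j => j.1.2 + j.2.2 = n₂)).filter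
        (fun j => j.1.1 + j.2.1 = n₁)).filter
          (fun j => -(j.1.1 ^ 2 + j.1.2 ^ 2 + j.2.1 ^ 2 + j.2.2 ^ 2) = n)) with hJ
  have hmem : ∀ j ∈ J, zAbs2 j.2 ≤ N₂ ∧ j.1.2 + j.2.2 = n₂ ∧ j.1.1 + j.2.1 = n₁ ∧
      -(j.1.1 ^ 2 + j.1.2 ^ 2 + j.2.1 ^ 2 + j.2.2 ^ 2) = n := by
    intro j hj
    simp only [hJ, Finset.mem_filter, Finset.mem_product, mem_zBall] at hj
    tauto
  have hcard : (J.image Prod.snd).card = J.card := by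
    refine Finset.card_image_of_injOn fun j hj j' hj' he => ?_
    obtain ⟨_, h1, h2, _⟩ := hmem j hj
    obtain ⟨_, h1', h2', _⟩ := hmem j' hj'
    rw [he] at h1 h2
    ext
    · omega
    · omega
    · rw [he]
    · rw [he]
  rw [← hcard]
  refine h N₂ hN (n₁, n₂) (-2 * n - n₁ ^ 2 - n₂ ^ 2) _ fun l hl => ?_
  obtain ⟨j, hj, rfl⟩ := Finset.mem_image.1 hl
  obtain ⟨h0, h1, h2, h3⟩ := hmem j hj
  constructor
  · have := (Real.sqrt_le_left (by linarith)).1 h0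
    exact this
  · simp only
    rw [← h1, ← h2, ← h3]; ring

/-- Frequency-localized weighted bilinear `L²` Strichartz estimate on `𝕋²`:
for `φ_{N₁}, φ_{N₂} ∈ L²(𝕋²)` with Fourier support in `B(0,N₁)`, `B(0,N₂)`, `N₁ ≥ N₂`, and a
finite interval `I` centered at `0`,
`‖g'(t)^{1/2} (S(t)φ_{N₁})(S(t)φ_{N₂})‖_{L²(I×𝕋²)} ≤ C(ε,I) min(N₁,N₂)^ε ‖φ_{N₁}‖_{L²} ‖φ_{N₂}‖_{L²}`. -/
theorem weighted_bilinear_Strichartz_frequency_localized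
    (g : ℝ → ℝ) (hg_smooth : ContDiff ℝ (⊤ : ℕ∞) g) (hg_mono : StrictMono g)
    (hg0 : g 0 = 0) (hg'0 : deriv g 0 = 0) :
    ∀ ε : ℝ, 0 < ε → ∀ r : ℝ, 0 < r →
      ∃ C : ℝ, 0 < C ∧ ∀ N₁ N₂ : ℝ, 1 ≤ N₂ → N₂ ≤ N₁ →
        ∀ φ₁ φ₂ : ℝ → ℝ → ℂ, Periodic2 φ₁ → Periodic2 φ₂ →
          LpT2 2 φ₁ < ⊤ → LpT2 2 φ₂ < ⊤ →
          (∀ k : ℤ × ℤ, N₁ < zAbs2 k → fCoeff2 φ₁ k = 0) →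
          (∀ k : ℤ × ℤ, N₂ < zAbs2 k → fCoeff2 φ₂ k = 0) →
          LpIT2 2 (Icc (-r) r)
              (fun t x1 x2 =>
                ((deriv g t ^ ((1:ℝ)/2) : ℝ) : ℂ) * (Sop2 g φ₁ t x1 x2 * Sop2 g φ₂ t x1 x2)) ≤
            ENNReal.ofReal (C * (min N₁ N₂) ^ ε) * (LpT2 2 φ₁ * LpT2 2 φ₂) := by
  intro ε hε r hr
  obtain ⟨M, hM, hst⟩ := spacetime_bound g hg_smooth hg_mono.monotone r hr
  obtain ⟨K, hK, hres⟩ := resonance_count (2 * ε) (by positivity)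
  -- each of the two Bessel inequalities contributes `(2π)²`
  set B : ℝ := (2 * π) ^ 4 with hB
  have hB0 : 0 < B := by positivity
  refine ⟨Real.sqrt (M * K * B), by positivity, ?_⟩
  intro N₁ N₂ hN₂ hN φ₁ φ₂ _ _ _ _ hφ₁ hφ₂
  have hN0 : 0 ≤ N₂ := by linarith
  set Y₁ := ∫⁻ x1 in Ioc (0 : ℝ) (2 * π), ∫⁻ x2 in Ioc (0 : ℝ) (2 * π),
    ENNReal.ofReal (‖φ₁ x1 x2‖ ^ 2) with hY₁
  set Y₂ := ∫⁻ x1 in Ioc (0 : ℝ) (2 * π), ∫⁻ x2 in Ioc (0 : ℝ) (2 * π),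
    ENNReal.ofReal (‖φ₂ x1 x2‖ ^ 2) with hY₂
  set J := zBall N₁ ×ˢ zBall N₂ with hJ
  have hprod : ∀ t x1 x2, Sop2 g φ₁ t x1 x2 * Sop2 g φ₂ t x1 x2 =
      ∑ j ∈ J, fCoeff2 φ₁ j.1 * fCoeff2 φ₂ j.2 *
        ex ((-(j.1.1 ^ 2 + j.1.2 ^ 2 + j.2.1 ^ 2 + j.2.2 ^ 2) : ℤ) * g t) *
        ex ((j.1.1 + j.2.1 : ℤ) * x1) * ex ((j.1.2 + j.2.2 : ℤ) * x2) := by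
    intro t x1 x2
    rw [Sop2_eq_sum g φ₁ N₁ hφ₁, Sop2_eq_sum g φ₂ N₂ hφ₂, Finset.sum_mul_sum,
      ← Finset.sum_product']
    refine Finset.sum_congr rfl fun j _ => ?_
    rw [show ((-(j.1.1 ^ 2 + j.1.2 ^ 2 + j.2.1 ^ 2 + j.2.2 ^ 2) : ℤ) : ℝ) * g t =
        -(g t * ((j.1.1 : ℝ) ^ 2 + (j.1.2 : ℝ) ^ 2)) +
          -(g t * ((j.2.1 : ℝ) ^ 2 + (j.2.2 : ℝ) ^ 2)) by push_cast; ring,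
      show ((j.1.1 + j.2.1 : ℤ) : ℝ) * x1 = j.1.1 * x1 + j.2.1 * x1 by push_cast; ring,
      show ((j.1.2 + j.2.2 : ℤ) : ℝ) * x2 = j.1.2 * x2 + j.2.2 * x2 by push_cast; ring,
      ex_add, ex_add, ex_add]
    ring
  have hmain := hst _ J (fun j => fCoeff2 φ₁ j.1 * fCoeff2 φ₂ j.2) (fun j => j.1.1 + j.2.1)
    (fun j => j.1.2 + j.2.2) (fun j => -(j.1.1 ^ 2 + j.1.2 ^ 2 + j.2.1 ^ 2 + j.2.2 ^ 2))
    (K * N₂ ^ (2 * ε)) (hres N₁ N₂ hN₂)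
  have hsum : ∑ j ∈ J, ‖fCoeff2 φ₁ j.1 * fCoeff2 φ₂ j.2‖ ^ 2 =
      (∑ k ∈ zBall N₁, ‖fCoeff2 φ₁ k‖ ^ 2) * ∑ l ∈ zBall N₂, ‖fCoeff2 φ₂ l‖ ^ 2 := by
    rw [Finset.sum_mul_sum, ← Finset.sum_product']
    exact Finset.sum_congr rfl fun j _ => by rw [norm_mul, mul_pow]
  have hX : ∫⁻ t in Icc (-r) r, ∫⁻ x1 in Ioc (0 : ℝ) (2 * π), ∫⁻ x2 in Ioc (0 : ℝ) (2 * π),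
      ENNReal.ofReal (‖((deriv g t ^ ((1 : ℝ) / 2) : ℝ) : ℂ) *
        (Sop2 g φ₁ t x1 x2 * Sop2 g φ₂ t x1 x2)‖ ^ 2) ≤
      ENNReal.ofReal (Real.sqrt (M * K * B) * N₂ ^ ε) ^ 2 * (Y₁ * Y₂) := by
    simp_rw [hprod]
    refine hmain.trans ?_
    have hconst : ENNReal.ofReal (Real.sqrt (M * K * B) * N₂ ^ ε) ^ 2 =
        ENNReal.ofReal (M * (K * N₂ ^ (2 * ε))) * ENNReal.ofReal (2 * π) ^ 4 := by
      rw [← ENNReal.ofReal_pow (by positivity), ← ENNReal.ofReal_pow (by positivity),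
        ← ENNReal.ofReal_mul (by positivity), mul_pow, Real.sq_sqrt (by positivity), ← hB,
        mul_comm 2 ε, Real.rpow_mul hN0, Real.rpow_two]
      congr 1; ring
    rw [hsum, hconst,
      ENNReal.ofReal_mul (by positivity : (0 : ℝ) ≤ M * (K * N₂ ^ (2 * ε))),
      ENNReal.ofReal_mul
        (by positivity : (0 : ℝ) ≤ ∑ k ∈ zBall N₁, ‖fCoeff2 φ₁ k‖ ^ 2),
      ENNReal.ofReal_sum_of_nonneg (fun _ _ => by positivity),
      ENNReal.ofReal_sum_of_nonneg (fun _ _ => by positivity)]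
    calc _ ≤ ENNReal.ofReal (M * (K * N₂ ^ (2 * ε))) *
          ((ENNReal.ofReal (2 * π) * (ENNReal.ofReal (2 * π) * Y₁)) *
            (ENNReal.ofReal (2 * π) * (ENNReal.ofReal (2 * π) * Y₂))) := by
          gcongr
          · exact bessel_two φ₁ _
          · exact bessel_two φ₂ _
      _ = _ := by ring
  unfold LpIT2 LpT2
  rw [min_eq_right hN]
  simp_rw [Real.rpow_two]
  refine (ENNReal.rpow_le_rpow hX (by norm_num)).trans (le_of_eq ?_)
  rw [ENNReal.mul_rpow_of_nonneg _ _ (by norm_num), ENNReal.mul_rpow_of_nonneg _ _ (by norm_num),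
    ← ENNReal.rpow_natCast, ← ENNReal.rpow_mul,
    show ((2 : ℕ) : ℝ) * (1 / 2) = 1 by norm_num, ENNReal.rpow_one]
end
end
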